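/- arXiv:math/0502046 — 6 statements merged into one kernel-verified Lean document; each statement's English description precedes it below -/
import Mathlib

section
/- Let A be a nontrivial commutative ring and n ≥ 1. The elementary homogeneous symmetric polynomials p_0(x), p_1(x), …, p_n(x) in the 2n variables x_{01}, x_{11}, …, x_{0n}, x_{1n} are algebraically independent over A. -/
open MvPolynomial

/-- The elementary homogeneous symmetric polynomial `p_k` in the `2n` variables
`x_{01}, x_{11}, …, x_{0n}, x_{1n}` (variable `(i, 0)` is `x_{0i}` and `(i, 1)` is `x_{1i}`),
defined by `p_k = Σ_{S ⊆ {1,…,n}, |S| = k} (∏_{i ∉ S} x_{0i}) (∏_{i ∈ S} x_{1i})`. -/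
noncomputable def ehsp (A : Type*) [CommRing A] (n : ℕ) (k : ℕ) :
    MvPolynomial (Fin n × Fin 2) A :=
  ∑ S ∈ Finset.powersetCard k (Finset.univ : Finset (Fin n)),
    (∏ i ∈ Sᶜ, X (i, (0 : Fin 2))) * ∏ i ∈ S, X (i, (1 : Fin 2))

/-!
Specialize all `x_{0i}` to a single variable `T` and rename `x_{1i}` to `y_i`: then `p_k` becomes
`T ^ (n - k) * e_k(y)`. By the fundamental theorem on symmetric polynomials, `e_1, …, e_n` are
algebraically independent over `A[T]`, and they remain so after multiplication by powers of the
nonzerodivisor `T`. As `p_0` becomes `T ^ n`, which is transcendental over `A` for `n ≥ 1`, the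
specialized family is algebraically independent over `A` by transitivity, and hence so is the
original one.
-/

open scoped Polynomial nonZeroDivisors

section AlgebraicIndependence

variable {R S B : Type*} [CommRing R] [CommRing S] [CommRing B]

theorem transcendental_C_mul_X {r : R} (hr : r ∈ R⁰) :
    Transcendental R (Polynomial.C r * Polynomial.X) := by
  nontriviality R
  have hr₀ : r ≠ 0 := nonZeroDivisors.ne_zero hr
  refine Polynomial.transcendental _ ?_ ?_
  · simp [Polynomial.natDegree_C_mul_X r hr₀]
  · simpa using hr

theorem algebraicIndependent_smul_of_mem_nonZeroDivisors {ι : Type*} [Algebra R B] {x : ι → B}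
    (hx : AlgebraicIndependent R x) {r : ι → R} (hr : ∀ i, r i ∈ R⁰) :
    AlgebraicIndependent R fun i => r i • x i := by
  simpa [Algebra.smul_def] using
    hx.polynomial_aeval_of_transcendental fun i => transcendental_C_mul_X (hr i)

theorem algebraicIndependent_fin_cons_algebraMap [Algebra R S] [Algebra S B] [Algebra R B]
    [IsScalarTower R S B] {n : ℕ} {t : S} {y : Fin n → B} (ht : Transcendental R t)
    (hy : AlgebraicIndependent S y) :
    AlgebraicIndependent R (Fin.cons (algebraMap S B t) y : Fin (n + 1) → B) := by
  have ht' : AlgebraicIndependent R fun _ : Unit => t :=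
    algebraicIndependent_unique_type_iff.mpr ht
  let e : Fin (n + 1) ≃ Fin n ⊕ Unit :=
    (_root_.finSuccEquiv n).trans (Equiv.optionEquivSumPUnit _)
  refine (algebraicIndependent_equiv' e ?_).mpr (ht'.sumElim_comp hy)
  funext k
  cases k using Fin.cases <;> simp [e]

end AlgebraicIndependence

theorem algebraicIndependent_esymm (σ R : Type*) [Fintype σ] [CommRing R] {n : ℕ}
    (hn : n ≤ Fintype.card σ) :
    AlgebraicIndependent R fun k : Fin n => esymm σ R (k + 1) := by
  have h := Subtype.val_injective.comp (esymmAlgHom_injective (σ := σ) R hn)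
  simpa only [AlgebraicIndependent, Function.comp_def, esymmAlgHom_apply] using h

theorem aeval_ehsp {A B : Type*} [CommRing A] [CommRing B] [Algebra A B] {n : ℕ} (t : B)
    (y : Fin n → B) (k : ℕ) :
    aeval (fun i : Fin n × Fin 2 => ![t, y i.1] i.2) (ehsp A n k) =
      t ^ (n - k) * ∑ S ∈ Finset.powersetCard k Finset.univ, ∏ i ∈ S, y i := by
  simp only [ehsp, map_sum, map_mul, map_prod, aeval_X, Finset.mul_sum]
  refine Finset.sum_congr rfl fun S hS => ?_
  have hcard : Sᶜ.card = n - k := by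
    rw [Finset.card_compl, Fintype.card_fin, (Finset.mem_powersetCard.mp hS).2]
  simp [hcard]

/-- For a nontrivial commutative ring `A` and `n ≥ 1`, the elementary
homogeneous symmetric polynomials `p_0, p_1, …, p_n` are algebraically independent over `A`. -/
theorem ehsp_algebraicIndependent (A : Type*) [CommRing A] [Nontrivial A] (n : ℕ) (hn : 1 ≤ n) :
    AlgebraicIndependent A (fun k : Fin (n + 1) => ehsp A n (k : ℕ)) := by
  let T : A[X] := Polynomial.X
  let φ : MvPolynomial (Fin n × Fin 2) A →ₐ[A] MvPolynomial (Fin n) A[X] :=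
    aeval fun i => ![C T, X i.1] i.2
  have hφ (k : ℕ) : φ (ehsp A n k) = T ^ (n - k) • esymm (Fin n) A[X] k := by
    rw [aeval_ehsp, smul_eq_C_mul, C_pow, esymm]
  have hT : Transcendental A (T ^ n) := (Polynomial.transcendental_X A).pow hn
  have hT_mem (m : ℕ) : T ^ m ∈ A[X]⁰ := pow_mem Polynomial.X_mem_nonzeroDivisors m
  have hy : AlgebraicIndependent A[X]
      fun k : Fin n => T ^ (n - (k + 1)) • esymm (Fin n) A[X] (k + 1) :=
    algebraicIndependent_smul_of_mem_nonZeroDivisors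
      (algebraicIndependent_esymm (Fin n) A[X] (by simp)) fun _ => hT_mem _
  refine AlgebraicIndependent.of_comp φ ?_
  convert algebraicIndependent_fin_cons_algebraMap hT hy
  funext k
  cases k using Fin.cases <;> simp [hφ, smul_eq_C_mul, algebraMap_eq]
end

section
/- Let A be a commutative ring, n, m ≥ 1, and work in the polynomial ring B = A[x_{01},x_{11},…,x_{0n},x_{1n}, y_{01},y_{11},…,y_{0m},y_{1m}]. Let f(Z) = Σ_{k=0}^n (−1)^k p_k(x) Z^{n−k} and g(Z) = Σ_{l=0}^m (−1)^l p_l(y) Z^{m−l} be the polynomials over B whose coefficients are (up to sign) the elementary homogeneous symmetric polynomials in the x-variables and y-variables respectively. Then Res_{n,m}(f, g) = ∏_{i=1}^n ∏_{j=1}^m (x_{1i} y_{0j} − x_{0i} y_{1j}). -/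
open MvPolynomial Polynomial

/-- The Sylvester matrix of `f` and `g`, viewed with formal degrees `n` and `m`:
an `(m + n) × (m + n)` matrix whose first `m` rows hold shifted coefficients of `f`
(from the coefficient of `Z^n` down to the constant term) and whose last `n` rows
hold shifted coefficients of `g`. -/
noncomputable def sylvester {R : Type*} [CommRing R] (n m : ℕ) (f g : R[X]) :
    Matrix (Fin (m + n)) (Fin (m + n)) R :=
  Matrix.of fun i j =>
    Fin.addCases
      (fun i₀ : Fin m =>
        if (i₀ : ℕ) ≤ (j : ℕ) ∧ (j : ℕ) ≤ (i₀ : ℕ) + n then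
          f.coeff (n - ((j : ℕ) - (i₀ : ℕ))) else 0)
      (fun i₁ : Fin n =>
        if (i₁ : ℕ) ≤ (j : ℕ) ∧ (j : ℕ) ≤ (i₁ : ℕ) + m then
          g.coeff (m - ((j : ℕ) - (i₁ : ℕ))) else 0)
      i

/-- The resultant `Res_{n,m}(f, g)`: the determinant of the Sylvester matrix of `f` and `g`
viewed with formal degrees `n` and `m`. -/
noncomputable def res {R : Type*} [CommRing R] (n m : ℕ) (f g : R[X]) : R :=
  (sylvester n m f g).det

variable (A : Type*) [CommRing A] (n m : ℕ)

/-- The elementary homogeneous symmetric polynomial `p_k(x)` in the `x`-variables, inside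
the big polynomial ring `B = A[x_{01},…,x_{1n}, y_{01},…,y_{1m}]`. -/
noncomputable def pX (k : ℕ) : MvPolynomial ((Fin n × Fin 2) ⊕ (Fin m × Fin 2)) A :=
  ∑ S ∈ Finset.powersetCard k (Finset.univ : Finset (Fin n)),
    (∏ i ∈ Sᶜ, X (Sum.inl (i, (0 : Fin 2)))) * ∏ i ∈ S, X (Sum.inl (i, (1 : Fin 2)))

/-- The elementary homogeneous symmetric polynomial `p_l(y)` in the `y`-variables, inside
the big polynomial ring `B = A[x_{01},…,x_{1n}, y_{01},…,y_{1m}]`. -/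
noncomputable def pY (l : ℕ) : MvPolynomial ((Fin n × Fin 2) ⊕ (Fin m × Fin 2)) A :=
  ∑ S ∈ Finset.powersetCard l (Finset.univ : Finset (Fin m)),
    (∏ j ∈ Sᶜ, X (Sum.inr (j, (0 : Fin 2)))) * ∏ j ∈ S, X (Sum.inr (j, (1 : Fin 2)))

/-! The polynomial `f` factors as `∏ i, (x₀ᵢ Z - x₁ᵢ)`, and likewise `g`. Raising the formal degree
of one argument multiplies the resultant by the top formal coefficient of the other, up to sign, so
with formal degrees the resultant is multiplicative even where leading coefficients vanish. This
reduces everything, over any commutative ring, to the `2 × 2` determinant of two linear factors. -/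

section Sylvester

variable {R : Type*} [CommRing R] (n m : ℕ) (f g : R[X])

-- Mathlib writes coefficients in columns and in ascending order: hence the transpose and `revPerm`.
theorem sylvester_eq_submatrix_transpose :
    _root_.sylvester n m f g =
      (Polynomial.sylvester f g n m).transpose.submatrix
        (Fin.revPerm.trans (finCongr (add_comm m n)))
        (Fin.revPerm.trans (finCongr (add_comm m n))) := by
  ext i j
  have rev_castAdd (i : Fin m) :
      Fin.cast (add_comm m n) (Fin.castAdd n i).rev = Fin.natAdd n i.rev := by
    ext; simp only [Fin.val_cast, Fin.val_rev, Fin.val_castAdd, Fin.val_natAdd]; omega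
  have rev_natAdd (i : Fin n) :
      Fin.cast (add_comm m n) (Fin.natAdd m i).rev = Fin.castAdd m i.rev := by
    ext; simp only [Fin.val_cast, Fin.val_rev, Fin.val_castAdd, Fin.val_natAdd]; omega
  induction i using Fin.addCases with
  | left i =>
    simp only [Matrix.submatrix_apply, Matrix.transpose_apply, Equiv.coe_trans,
      Function.comp_apply, Fin.revPerm_apply, finCongr_apply, rev_castAdd, _root_.sylvester,
      Polynomial.sylvester, Matrix.of_apply, Fin.addCases_left, Fin.addCases_right,
      Set.mem_Icc, Fin.val_cast, Fin.val_rev]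
    grind
  | right i =>
    simp only [Matrix.submatrix_apply, Matrix.transpose_apply, Equiv.coe_trans,
      Function.comp_apply, Fin.revPerm_apply, finCongr_apply, rev_natAdd, _root_.sylvester,
      Polynomial.sylvester, Matrix.of_apply, Fin.addCases_left, Fin.addCases_right,
      Set.mem_Icc, Fin.val_cast, Fin.val_rev]
    grind

theorem res_eq_resultant : res n m f g = resultant f g n m := by
  rw [res, sylvester_eq_submatrix_transpose, Matrix.det_submatrix_equiv_self,
    Matrix.det_transpose, resultant]

end Sylvester

section Resultant

variable {R ι κ : Type*} [CommRing R]

theorem resultant_mul_left_of_natDegree_le {f₁ f₂ g : R[X]} {m₁ m₂ n : ℕ}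
    (hf₁ : f₁.natDegree ≤ m₁) (hf₂ : f₂.natDegree ≤ m₂) (hg : g.natDegree ≤ n) :
    resultant (f₁ * f₂) g (m₁ + m₂) n = resultant f₁ g m₁ n * resultant f₂ g m₂ n := by
  obtain ⟨k₁, rfl⟩ := le_iff_exists_add.mp hf₁
  obtain ⟨k₂, rfl⟩ := le_iff_exists_add.mp hf₂
  rw [add_add_add_comm, resultant_add_left_deg _ _ _ _ _ natDegree_mul_le,
    resultant_mul_left _ _ _ _ hg, resultant_add_left_deg _ _ _ _ _ le_rfl,
    resultant_add_left_deg _ _ _ _ _ le_rfl]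
  ring

theorem resultant_prod_left_of_natDegree_le (s : Finset ι) {f : ι → R[X]} {g : R[X]}
    {m : ι → ℕ} {n : ℕ} (hf : ∀ i ∈ s, (f i).natDegree ≤ m i) (hg : g.natDegree ≤ n) :
    resultant (∏ i ∈ s, f i) g (∑ i ∈ s, m i) n = ∏ i ∈ s, resultant (f i) g (m i) n := by
  classical
  induction s using Finset.induction with
  | empty => simp
  | insert i s hi ih =>
    rw [Finset.forall_mem_insert] at hf
    have hprod : (∏ j ∈ s, f j).natDegree ≤ ∑ j ∈ s, m j :=
      (natDegree_prod_le s f).trans (Finset.sum_le_sum hf.2)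
    rw [Finset.prod_insert hi, Finset.sum_insert hi, Finset.prod_insert hi,
      resultant_mul_left_of_natDegree_le hf.1 hprod hg, ih hf.2]

theorem resultant_prod_right_of_natDegree_le (s : Finset ι) {f : R[X]} {g : ι → R[X]}
    {m : ℕ} {n : ι → ℕ} (hf : f.natDegree ≤ m) (hg : ∀ j ∈ s, (g j).natDegree ≤ n j) :
    resultant f (∏ j ∈ s, g j) m (∑ j ∈ s, n j) = ∏ j ∈ s, resultant f (g j) m (n j) := by
  simp_rw [resultant_comm f]
  rw [resultant_prod_left_of_natDegree_le s hg hf, Finset.prod_mul_distrib,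
    Finset.prod_pow_eq_pow_sum, ← Finset.mul_sum]

theorem resultant_one_one (f g : R[X]) :
    resultant f g 1 1 = f.coeff 1 * g.coeff 0 - f.coeff 0 * g.coeff 1 := by
  have hsylv : Polynomial.sylvester f g 1 1 =
      !![g.coeff 0, f.coeff 0; g.coeff 1, f.coeff 1] := by
    ext i j
    fin_cases i <;> fin_cases j <;> simp [Polynomial.sylvester, Fin.addCases]
  calc resultant f g 1 1 = (!![g.coeff 0, f.coeff 0; g.coeff 1, f.coeff 1]).det :=
        congrArg Matrix.det hsylv
    _ = f.coeff 1 * g.coeff 0 - f.coeff 0 * g.coeff 1 := by rw [Matrix.det_fin_two_of]; ring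

theorem resultant_linear (a b c d : R) :
    resultant (Polynomial.C a * Polynomial.X - Polynomial.C b)
      (Polynomial.C c * Polynomial.X - Polynomial.C d) 1 1 = b * c - a * d := by
  have coeff_zero (r s : R) : (Polynomial.C r * Polynomial.X - Polynomial.C s).coeff 0 = -s := by
    simp
  have coeff_one (r s : R) : (Polynomial.C r * Polynomial.X - Polynomial.C s).coeff 1 = r := by
    simp
  rw [resultant_one_one, coeff_zero, coeff_zero, coeff_one, coeff_one]
  ring

theorem resultant_prod_linear [Fintype ι] [Fintype κ] (a b : ι → R) (c d : κ → R) :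
    resultant (∏ i, (Polynomial.C (a i) * Polynomial.X - Polynomial.C (b i)))
      (∏ j, (Polynomial.C (c j) * Polynomial.X - Polynomial.C (d j)))
      (Fintype.card ι) (Fintype.card κ) = ∏ i, ∏ j, (b i * c j - a i * d j) := by
  have natDegree_le (r s : R) :
      (Polynomial.C r * Polynomial.X - Polynomial.C s).natDegree ≤ 1 := by
    compute_degree
  have natDegree_prod_le :
      (∏ j, (Polynomial.C (c j) * Polynomial.X - Polynomial.C (d j))).natDegree ≤ ∑ _ : κ, 1 :=
    (natDegree_prod_le _ _).trans (Finset.sum_le_sum fun j _ ↦ natDegree_le (c j) (d j))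
  rw [Fintype.card_eq_sum_ones, Fintype.card_eq_sum_ones,
    resultant_prod_left_of_natDegree_le _ (fun i _ ↦ natDegree_le (a i) (b i)) natDegree_prod_le]
  refine Finset.prod_congr rfl fun i _ ↦ ?_
  rw [resultant_prod_right_of_natDegree_le _ (natDegree_le (a i) (b i))
    fun j _ ↦ natDegree_le (c j) (d j)]
  exact Finset.prod_congr rfl fun j _ ↦ resultant_linear (a i) (b i) (c j) (d j)

end Resultant

section HomogeneousEsymm

variable {R ι : Type*} [Fintype ι] [DecidableEq ι]

/-- The elementary homogeneous symmetric polynomial `p_k` evaluated at the points `(a i : b i)`: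
up to sign, the coefficient of `Xⁿ⁻ᵏ Yᵏ` in `∏ i, (a i * X - b i * Y)`, with `n` the size of `ι`.
Both `pX` and `pY` are instances of it. -/
def homogeneousEsymm [CommSemiring R] (a b : ι → R) (k : ℕ) : R :=
  ∑ S ∈ Finset.powersetCard k Finset.univ, (∏ i ∈ Sᶜ, a i) * ∏ i ∈ S, b i

theorem prod_linear_eq_sum_homogeneousEsymm [CommRing R] (a b : ι → R) :
    ∏ i, (Polynomial.C (a i) * Polynomial.X - Polynomial.C (b i)) =
      ∑ k ∈ Finset.range (Fintype.card ι + 1),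
        Polynomial.C ((-1) ^ k * homogeneousEsymm a b k) * Polynomial.X ^ (Fintype.card ι - k) := by
  rw [Finset.prod_sub, Finset.sum_powerset, Finset.card_univ]
  refine Finset.sum_congr rfl fun k _ ↦ ?_
  rw [homogeneousEsymm, Finset.mul_sum, map_sum, Finset.sum_mul]
  refine Finset.sum_congr rfl fun S hS ↦ ?_
  have hcard : S.card = k := (Finset.mem_powersetCard.mp hS).2
  rw [← Finset.compl_eq_univ_sdiff, Finset.prod_mul_distrib, Finset.prod_const,
    Finset.card_compl, hcard]
  simp only [map_mul, map_pow, map_neg, map_one, map_prod]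
  ring

end HomogeneousEsymm

theorem res_ehsp_general {R : Type*} [CommRing R] {n m : ℕ} (a b : Fin n → R) (c d : Fin m → R) :
    res n m
      (∑ k : Fin (n + 1),
        Polynomial.C ((-1) ^ (k : ℕ) * homogeneousEsymm a b k) * Polynomial.X ^ (n - (k : ℕ)))
      (∑ l : Fin (m + 1),
        Polynomial.C ((-1) ^ (l : ℕ) * homogeneousEsymm c d l) * Polynomial.X ^ (m - (l : ℕ))) =
    ∏ i, ∏ j, (b i * c j - a i * d j) := by
  have prod_f := prod_linear_eq_sum_homogeneousEsymm a b
  have prod_g := prod_linear_eq_sum_homogeneousEsymm c d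
  simp only [Fintype.card_fin, Finset.sum_range] at prod_f prod_g
  rw [res_eq_resultant, ← prod_f, ← prod_g]
  simpa only [Fintype.card_fin] using resultant_prod_linear a b c d

/-- For `f(Z) = Σ_{k=0}^n (−1)^k p_k(x) Z^{n−k}` and
`g(Z) = Σ_{l=0}^m (−1)^l p_l(y) Z^{m−l}` over `B = A[x, y]`, the resultant satisfies
`Res_{n,m}(f, g) = ∏_{i=1}^n ∏_{j=1}^m (x_{1i} y_{0j} − x_{0i} y_{1j})`. -/
theorem res_ehsp (hn : 1 ≤ n) (hm : 1 ≤ m) :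
    res n m
      (∑ k : Fin (n + 1),
        Polynomial.C ((-1 : MvPolynomial ((Fin n × Fin 2) ⊕ (Fin m × Fin 2)) A) ^ (k : ℕ) *
          pX A n m (k : ℕ)) * Polynomial.X ^ (n - (k : ℕ)))
      (∑ l : Fin (m + 1),
        Polynomial.C ((-1 : MvPolynomial ((Fin n × Fin 2) ⊕ (Fin m × Fin 2)) A) ^ (l : ℕ) *
          pY A n m (l : ℕ)) * Polynomial.X ^ (m - (l : ℕ))) =
    ∏ i : Fin n, ∏ j : Fin m,
      (X (Sum.inl (i, (1 : Fin 2))) * X (Sum.inr (j, (0 : Fin 2))) -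
        X (Sum.inl (i, (0 : Fin 2))) * X (Sum.inr (j, (1 : Fin 2)))) := by
  exact res_ehsp_general (fun i ↦ X (Sum.inl (i, 0))) (fun i ↦ X (Sum.inl (i, 1)))
    (fun j ↦ X (Sum.inr (j, 0))) (fun j ↦ X (Sum.inr (j, 1)))
end

section
/- Let A be a commutative ring and n ≥ 1. Let the symmetric group S_n act on the polynomial ring A[x_{01},x_{11},…,x_{0n},x_{1n}] by permuting the index i of the pairs of variables (x_{0i}, x_{1i}). Suppose f is S_n-invariant and there is a d ≥ 0 such that f is homogeneous of degree d in the pair of variables (x_{0i}, x_{1i}) for every i = 1, …, n (i.e., every monomial of f has total degree d in x_{0i} and x_{1i}, for each i). Then f lies in the A-subalgebra generated by the elementary homogeneous symmetric polynomials p_0(x), …, p_n(x). -/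
open MvPolynomial

/-!
Setting `x_{0i} = 1` loses no information on polynomials of a fixed degree `d` in each pair, and it
turns `p_k` into the elementary symmetric polynomial `e_k`. So the dehomogenization of `f` is
`q(e_1, …, e_n)` for some polynomial `q`, of degree at most `d` in each variable. This bounds the
total degree of `q` by `d`: in the lexicographic order the leading exponent of `e_1^{t_1}⋯e_n^{t_n}`
determines `t` and has first entry `t_1 + ⋯ + t_n`, so the leading terms do not cancel. Completing
every monomial of `q` by a power of `p_0` to degree `d` then recovers `f`.
-/

section Dehomogenization

variable {σ τ R : Type*} [CommSemiring R]

/-- The weight with values in `σ → ℕ` for which `x_{0i}` and `x_{1i}` both have weight the `i`-th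
unit vector. Being weighted homogeneous of weight `d` for it means being homogeneous of degree
`d i` in each pair `(x_{0i}, x_{1i})`. -/
def pairWeight (σ : Type*) [DecidableEq σ] (q : σ × Fin 2) : σ → ℕ :=
  Pi.single q.1 1

/-- The exponents of the variables `x_{1i}` in a monomial in the variables `x_{0i}, x_{1i}`. -/
noncomputable def sndExponent : (σ × Fin 2 →₀ ℕ) →+ (σ →₀ ℕ) :=
  Finsupp.comapDomain.addMonoidHom (Prod.mk_left_injective 1)

/-- Dehomogenization of polynomials in the pairs `(x_{0i}, x_{1i})`: the substitution `x_{0i} = 1`,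
with `x_{1i}` renamed to `x_i`. -/
noncomputable def dehomogenize (σ R : Type*) [CommSemiring R] :
    MvPolynomial (σ × Fin 2) R →ₐ[R] MvPolynomial σ R :=
  aeval fun q => ![1, X q.1] q.2

@[simp]
lemma sndExponent_apply (m : σ × Fin 2 →₀ ℕ) (i : σ) : sndExponent m i = m (i, 1) :=
  rfl

@[simp]
lemma sndExponent_single_zero (i : σ) (k : ℕ) : sndExponent (.single (i, 0) k) = 0 := by
  ext
  simp

@[simp]
lemma sndExponent_single_one (i : σ) (k : ℕ) : sndExponent (.single (i, 1) k) = .single i k := by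
  classical
  ext
  simp [Finsupp.single_apply]

lemma weight_pairWeight_apply [DecidableEq σ] (m : σ × Fin 2 →₀ ℕ) (i : σ) :
    Finsupp.weight (pairWeight σ) m i = m (i, 0) + m (i, 1) := by
  induction m using Finsupp.induction_linear with
  | zero => simp
  | add m₁ m₂ h₁ h₂ => simp only [map_add, Pi.add_apply, Finsupp.add_apply, h₁, h₂]; ring
  | single q k =>
    obtain ⟨j, l⟩ := q
    fin_cases l <;> simp [Finsupp.weight_single, pairWeight, Pi.single_apply,
      Finsupp.single_apply, eq_comm]

lemma sndExponent_inj_of_weight_eq [DecidableEq σ] {m m' : σ × Fin 2 →₀ ℕ}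
    (h : Finsupp.weight (pairWeight σ) m = Finsupp.weight (pairWeight σ) m') :
    sndExponent m = sndExponent m' ↔ m = m' := by
  refine ⟨fun hsnd => ?_, congrArg sndExponent⟩
  ext ⟨i, l⟩
  have hsnd_i : m (i, 1) = m' (i, 1) := DFunLike.congr_fun hsnd i
  have hpair_i := congrFun h i
  rw [weight_pairWeight_apply, weight_pairWeight_apply] at hpair_i
  fin_cases l
  · exact Nat.add_right_cancel (hsnd_i ▸ hpair_i)
  · exact hsnd_i

lemma dehomogenize_X_zero (i : σ) : dehomogenize σ R (X (i, 0)) = 1 := by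
  simp [dehomogenize]

lemma dehomogenize_X_one (i : σ) : dehomogenize σ R (X (i, 1)) = X i := by
  simp [dehomogenize]

lemma dehomogenize_monomial (m : σ × Fin 2 →₀ ℕ) (c : R) :
    dehomogenize σ R (monomial m c) = monomial (sndExponent m) c := by
  suffices h : (m.prod fun q k => (![1, X q.1] q.2 : MvPolynomial σ R) ^ k) =
      monomial (sndExponent m) 1 by
    rw [dehomogenize, aeval_monomial, h, algebraMap_eq, C_mul_monomial, mul_one]
  induction m using Finsupp.induction_linear with
  | zero => simp
  | add m₁ m₂ h₁ h₂ =>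
    rw [Finsupp.prod_add_index' (fun _ => pow_zero _) fun _ => pow_add _, h₁, h₂, monomial_mul,
      mul_one, map_add]
  | single q k =>
    obtain ⟨i, l⟩ := q
    fin_cases l <;> simp [X_pow_eq_monomial]

lemma dehomogenize_rename (e : σ → τ) (f : MvPolynomial (σ × Fin 2) R) :
    dehomogenize τ R (rename (Prod.map e id) f) = rename e (dehomogenize σ R f) := by
  rw [dehomogenize, dehomogenize, aeval_rename, ← AlgHom.comp_apply, comp_aeval]
  congr 2
  ext ⟨i, l⟩ : 1
  fin_cases l <;> simp

variable [DecidableEq σ] {d : σ → ℕ} {f g : MvPolynomial (σ × Fin 2) R}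

lemma coeff_sndExponent_dehomogenize (hf : IsWeightedHomogeneous (pairWeight σ) f d)
    {m : σ × Fin 2 →₀ ℕ} (hm : Finsupp.weight (pairWeight σ) m = d) :
    coeff (sndExponent m) (dehomogenize σ R f) = coeff m f := by
  classical
  induction hf using IsWeightedHomogeneous.induction_on with
  | zero => simp
  | add f g _ _ hf hg => simp [hf, hg]
  | monomial m' c hm' =>
    simp only [dehomogenize_monomial, coeff_monomial,
      sndExponent_inj_of_weight_eq (hm'.trans hm.symm)]

lemma dehomogenize_inj (hf : IsWeightedHomogeneous (pairWeight σ) f d)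
    (hg : IsWeightedHomogeneous (pairWeight σ) g d) :
    dehomogenize σ R f = dehomogenize σ R g ↔ f = g := by
  refine ⟨fun h => ?_, congrArg _⟩
  ext m
  by_cases hm : Finsupp.weight (pairWeight σ) m = d
  · rw [← coeff_sndExponent_dehomogenize hf hm, h, coeff_sndExponent_dehomogenize hg hm]
  · rw [hf.coeff_eq_zero m hm, hg.coeff_eq_zero m hm]

lemma degreeOf_dehomogenize_le (hf : IsWeightedHomogeneous (pairWeight σ) f d) (i : σ) :
    degreeOf i (dehomogenize σ R f) ≤ d i := by
  induction hf using IsWeightedHomogeneous.induction_on with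
  | zero => simp
  | add f g _ _ hf hg =>
    rw [map_add]
    exact (degreeOf_add_le i _ _).trans (max_le hf hg)
  | monomial m c hm =>
    obtain rfl | hc := eq_or_ne c 0
    · simp
    · rw [dehomogenize_monomial, degreeOf_monomial_eq _ _ hc, ← hm, weight_pairWeight_apply]
      exact Nat.le_add_left _ _

end Dehomogenization

section SymmetricPolynomials

open AddMonoidAlgebra

variable {R : Type*} [CommSemiring R] {m n : ℕ}

lemma accumulate_apply_zero (t : Fin n →₀ ℕ) : Fin.accumulate n (m + 1) t 0 = t.degree := by
  simp [Fin.accumulate_apply, Finsupp.degree_eq_sum]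

lemma monotone_ofLex_apply_bot {σ N : Type*} [LinearOrder σ] [OrderBot σ] [PartialOrder N]
    [Zero N] : Monotone fun s : Lex (σ →₀ N) => ofLex s ⊥ := fun s t hst => by
  obtain rfl | hlt := eq_or_lt_of_le hst
  · rfl
  obtain ⟨i, heq, hi⟩ := Finsupp.Lex.lt_iff.1 hlt
  obtain rfl | hbot := eq_or_ne i ⊥
  · exact hi.le
  · exact (heq ⊥ hbot.bot_lt).le

lemma ofLex_supDegree_apply_le_degreeOf {σ : Type*} [LinearOrder σ] (p : MvPolynomial σ R)
    (i : σ) : ofLex (p.supDegree toLex) i ≤ degreeOf i p := by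
  obtain rfl | hp := eq_or_ne p 0
  · rw [supDegree_zero]
    exact Nat.zero_le _
  · obtain ⟨s, hs, hsup⟩ := exists_supDegree_mem_support toLex hp
    rw [hsup]
    exact monomial_le_degreeOf i hs

lemma coe_esymmAlgHom_eq_sum {σ : Type*} [Fintype σ] (q : MvPolynomial (Fin n) R) :
    (esymmAlgHom σ R n q).val = ∑ t ∈ q.support, esymmAlgHomMonomial σ t (coeff t q) := by
  conv_lhs => rw [q.as_sum, map_sum, AddSubmonoidClass.coe_finsetSum]
  rfl

lemma totalDegree_le_degreeOf_esymmAlgHom (hnm : n ≤ m + 1) (q : MvPolynomial (Fin n) R) :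
    q.totalDegree ≤ degreeOf 0 (esymmAlgHom (Fin (m + 1)) R n q).val := by
  obtain rfl | hq := eq_or_ne q 0
  · simp
  let lexDegree (t : Fin n →₀ ℕ) : Lex (Fin (m + 1) →₀ ℕ) :=
    (esymmAlgHomMonomial (Fin (m + 1)) t (coeff t q)).supDegree toLex
  have lexDegree_eq {t} (ht : t ∈ q.support) :
      ⇑(ofLex (lexDegree t)) = Fin.accumulate n (m + 1) t :=
    supDegree_esymmAlgHomMonomial (mem_support_iff.1 ht) t hnm
  have lexDegree_injOn : Set.InjOn lexDegree q.support := fun s hs t ht hst =>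
    DFunLike.coe_injective <| Fin.accumulate_injective hnm <| by
      rw [← lexDegree_eq hs, hst, lexDegree_eq ht]
  have lexDegree_zero {t} (ht : t ∈ q.support) : ofLex (lexDegree t) 0 = t.degree := by
    rw [lexDegree_eq ht, accumulate_apply_zero]
  obtain ⟨t, ht, htmax⟩ := q.support.exists_max_image lexDegree (support_nonempty.2 hq)
  have hsup : (esymmAlgHom (Fin (m + 1)) R n q).val.supDegree toLex = lexDegree t := by
    rw [coe_esymmAlgHom_eq_sum]
    exact (supDegree_leadingCoeff_sum_eq ht fun s hs hst =>
      (htmax s hs).lt_of_ne (lexDegree_injOn.ne hs ht hst)).1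
  calc
    q.totalDegree ≤ ofLex (lexDegree t) 0 := Finset.sup_le fun s hs =>
      (lexDegree_zero hs).symm.trans_le (monotone_ofLex_apply_bot (htmax s hs))
    _ ≤ degreeOf 0 (esymmAlgHom (Fin (m + 1)) R n q).val :=
      hsup ▸ ofLex_supDegree_apply_le_degreeOf _ 0

end SymmetricPolynomials

section Ehsp

variable {A : Type*} [CommRing A] {n : ℕ}

lemma dehomogenize_ehsp (k : ℕ) : dehomogenize (Fin n) A (ehsp A n k) = esymm (Fin n) A k := by
  simp [ehsp, esymm, dehomogenize_X_zero, dehomogenize_X_one]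

lemma isWeightedHomogeneous_ehsp (k : ℕ) :
    IsWeightedHomogeneous (pairWeight (Fin n)) (ehsp A n k) 1 := by
  refine IsWeightedHomogeneous.sum _ _ _ fun S _ => ?_
  have hprod (T : Finset (Fin n)) (l : Fin 2) :
      IsWeightedHomogeneous (pairWeight (Fin n)) (∏ i ∈ T, (X (i, l) : MvPolynomial _ A))
        (∑ i ∈ T, Pi.single i 1) :=
    .prod _ _ _ fun i _ => isWeightedHomogeneous_X _ _ _
  convert (hprod Sᶜ 0).mul (hprod S 1)
  rw [Finset.sum_compl_add_sum]
  exact (Finset.univ_sum_single 1).symm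

/-- The monomial `p_1 ^ t_0 ⋯ p_n ^ t_{n-1}` in the elementary homogeneous symmetric polynomials,
multiplied by the power of `p_0` that makes it homogeneous of degree `d` in each pair of variables.
This needs `t.degree ≤ d`, as otherwise the truncated subtraction makes the exponent of `p_0`
zero. -/
noncomputable def ehspMonomial (A : Type*) [CommRing A] (d : ℕ) (t : Fin n →₀ ℕ) :
    MvPolynomial (Fin n × Fin 2) A :=
  ehsp A n 0 ^ (d - t.degree) * ∏ i : Fin n, ehsp A n (i + 1) ^ t i

lemma ehspMonomial_mem_adjoin (d : ℕ) (t : Fin n →₀ ℕ) :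
    ehspMonomial A d t ∈ Algebra.adjoin A (Set.range fun k : Fin (n + 1) => ehsp A n k) := by
  have ehsp_mem (k : Fin (n + 1)) :
      ehsp A n k ∈ Algebra.adjoin A (Set.range fun k : Fin (n + 1) => ehsp A n k) :=
    Algebra.subset_adjoin ⟨k, rfl⟩
  exact mul_mem (pow_mem (ehsp_mem 0) _) (prod_mem fun i _ => pow_mem (ehsp_mem i.succ) _)

lemma isWeightedHomogeneous_ehspMonomial {d : ℕ} {t : Fin n →₀ ℕ} (ht : t.degree ≤ d) :
    IsWeightedHomogeneous (pairWeight (Fin n)) (ehspMonomial A d t) (fun _ => d) := by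
  convert! ((isWeightedHomogeneous_ehsp 0).pow (d - t.degree)).mul
    (.prod Finset.univ _ _ fun (i : Fin n) _ => (isWeightedHomogeneous_ehsp (i + 1)).pow (t i))
  rw [← Finset.sum_smul, ← Finsupp.degree_eq_sum, ← add_smul, Nat.sub_add_cancel ht,
    Pi.smul_apply, Pi.one_apply, smul_eq_mul, mul_one]

lemma dehomogenize_ehspMonomial (d : ℕ) (t : Fin n →₀ ℕ) :
    dehomogenize (Fin n) A (ehspMonomial A d t) = esymmAlgHomMonomial (Fin n) t 1 := by
  rw [esymmAlgHomMonomial, esymmAlgHom_apply, aeval_monomial, Finsupp.prod_fintype _ _ (by simp)]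
  simp [ehspMonomial, dehomogenize_ehsp]

lemma exists_mem_adjoin_ehsp_dehomogenize_eq {d : ℕ} {q : MvPolynomial (Fin n) A}
    (hq : q.totalDegree ≤ d) :
    ∃ g ∈ Algebra.adjoin A (Set.range fun k : Fin (n + 1) => ehsp A n k),
      IsWeightedHomogeneous (pairWeight (Fin n)) g (fun _ => d) ∧
        dehomogenize (Fin n) A g = esymmAlgHom (Fin n) A n q := by
  refine ⟨∑ t ∈ q.support, coeff t q • ehspMonomial A d t, ?_, ?_, ?_⟩
  · exact sum_mem fun t _ => Subalgebra.smul_mem _ (ehspMonomial_mem_adjoin d t) _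
  · refine .sum _ _ _ fun t ht => ?_
    rw [smul_eq_C_mul]
    exact (isWeightedHomogeneous_ehspMonomial ((le_totalDegree ht).trans hq)).C_mul _
  · rw [coe_esymmAlgHom_eq_sum, map_sum]
    refine Finset.sum_congr rfl fun t _ => ?_
    rw [map_smul, dehomogenize_ehspMonomial, esymmAlgHomMonomial, esymmAlgHomMonomial,
      ← Subalgebra.coe_smul, ← map_smul, smul_monomial, smul_eq_mul, mul_one]

end Ehsp

/-- Let `S_n` act on `A[x_{01},…,x_{1n}]` by permuting the index `i` of the
pairs `(x_{0i}, x_{1i})`. If `f` is `S_n`-invariant and there is a `d ≥ 0` such that every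
monomial of `f` has total degree `d` in the pair `(x_{0i}, x_{1i})` for each `i`, then `f`
lies in the `A`-subalgebra generated by `p_0, …, p_n`. -/
theorem invariant_mem_adjoin_ehsp (A : Type*) [CommRing A] (n : ℕ) (hn : 1 ≤ n)
    (f : MvPolynomial (Fin n × Fin 2) A)
    (hinv : ∀ σ : Equiv.Perm (Fin n),
      rename (fun q : Fin n × Fin 2 => (σ q.1, q.2)) f = f)
    (d : ℕ)
    (hd : ∀ m ∈ f.support, ∀ i : Fin n, m (i, (0 : Fin 2)) + m (i, (1 : Fin 2)) = d) :
    f ∈ Algebra.adjoin A (Set.range fun k : Fin (n + 1) => ehsp A n (k : ℕ)) := by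
  obtain _ | n := n
  · contradiction
  have hf : IsWeightedHomogeneous (pairWeight (Fin (n + 1))) f (fun _ => d) := fun m hm =>
    funext fun i => (weight_pairWeight_apply m i).trans (hd m (mem_support_iff.2 hm) i)
  have hsymm : (dehomogenize (Fin (n + 1)) A f).IsSymmetric := fun σ => by
    rw [← dehomogenize_rename]
    exact congrArg _ (hinv σ)
  obtain ⟨q, hq⟩ := (esymmAlgHom_fin_bijective A (n + 1)).surjective ⟨_, hsymm⟩
  have hqf : (esymmAlgHom (Fin (n + 1)) A _ q).val = dehomogenize _ A f :=
    congrArg Subtype.val hq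
  have hqd : q.totalDegree ≤ d := calc
    q.totalDegree ≤ degreeOf 0 (dehomogenize _ A f) :=
      hqf ▸ totalDegree_le_degreeOf_esymmAlgHom le_rfl q
    _ ≤ d := degreeOf_dehomogenize_le hf 0
  obtain ⟨g, hg_mem, hg, hgq⟩ := exists_mem_adjoin_ehsp_dehomogenize_eq hqd
  rwa [(dehomogenize_inj hf hg).1 (hqf.symm.trans hgq.symm)]
end

section
/- Let A be a nontrivial commutative ring and n ≥ 1. The A-algebra homomorphism φ: A[y_0, …, y_n] → A[x_{01},x_{11},…,x_{0n},x_{1n}] defined by φ(y_k) = p_k(x) for k = 0, …, n is injective, and its image consists exactly of those polynomials f that are S_n-invariant and such that every monomial of f has the same total degree in the pair (x_{0i}, x_{1i}) for each i = 1, …, n. -/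
open MvPolynomial

/-!
The substitution `x_{0i} = T`, `x_{1i} = T t_i` turns `p_k` into `T ^ n e_k(t)`. It is injective on
balanced polynomials, because the degree of a balanced monomial determines the common degree of its
pairs of variables. It sends `φ F` to `∑ T ^ (n d) F_d(1, e_1, …, e_n)`, where `F_d` is the
homogeneous component of `F` of degree `d`, so the injectivity of `φ` is the algebraic independence
of `e_1, …, e_n`.

Conversely, let `f` be balanced and symmetric. Its component of degree `n d` becomes a symmetric
polynomial `G(e_1, …, e_n)` of degree at most `d` in each `t_i`. For the lexicographic order, the
leading monomial of `e_1 ^ u_1 ⋯ e_n ^ u_n` has exponent `u_1 + ⋯ + u_n` at the first variable, and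
leading monomials for distinct `u` are distinct; hence `G` has total degree at most `d`, and it is
homogenized to degree `d` by means of `y_0`.
-/

section GradedAeval

variable {R S S' σ τ : Type*} [CommSemiring R] [CommSemiring S] [Algebra R S]
  [CommSemiring S'] [Algebra R S']

/-- Evaluation at `g` that keeps track of the grading: the coefficient of `T ^ d` in
`gradedAeval g f` is the value at `g` of the homogeneous component of `f` of degree `d`. -/
noncomputable def gradedAeval (g : σ → S) : MvPolynomial σ R →ₐ[R] Polynomial S :=
  aeval fun i => Polynomial.X * Polynomial.C (g i)

theorem gradedAeval_X (g : σ → S) (i : σ) :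
    gradedAeval g (X i : MvPolynomial σ R) = Polynomial.X * Polynomial.C (g i) :=
  aeval_X _ i

theorem gradedAeval_monomial (g : σ → S) (m : σ →₀ ℕ) (c : R) :
    gradedAeval g (monomial m c) = Polynomial.monomial m.degree (aeval g (monomial m c)) := by
  rw [gradedAeval, aeval_monomial, aeval_monomial, ← Polynomial.C_mul_X_pow_eq_monomial]
  simp only [Finsupp.prod, mul_pow, Finset.prod_mul_distrib, Finset.prod_pow_eq_pow_sum,
    Finsupp.degree_apply, map_mul, map_prod, map_pow, Polynomial.algebraMap_apply]
  ring

theorem gradedAeval_of_isHomogeneous (g : σ → S) {f : MvPolynomial σ R} {d : ℕ}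
    (hf : f.IsHomogeneous d) : gradedAeval g f = Polynomial.monomial d (aeval g f) := by
  conv_lhs => rw [f.as_sum, map_sum]
  conv_rhs => rw [f.as_sum, map_sum, map_sum]
  refine Finset.sum_congr rfl fun m hm => ?_
  rw [gradedAeval_monomial, Finsupp.degree_eq_weight_one]
  exact congrArg (Polynomial.monomial · _) (hf (mem_support_iff.1 hm))

theorem mapAlgHom_gradedAeval (h : S →ₐ[R] S') (g : σ → S) (f : MvPolynomial σ R) :
    Polynomial.mapAlgHom h (gradedAeval g f) = gradedAeval (fun i => h (g i)) f := by
  suffices (Polynomial.mapAlgHom h).comp (gradedAeval g) = gradedAeval (fun i => h (g i)) from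
    DFunLike.congr_fun this f
  ext i : 1
  simp [gradedAeval_X]

theorem gradedAeval_rename (g : τ → S) (e : σ → τ) (f : MvPolynomial σ R) :
    gradedAeval g (rename e f) = gradedAeval (fun i => g (e i)) f :=
  aeval_rename e _ f

theorem gradedAeval_aeval (g : τ → S) {p : σ → MvPolynomial τ R} {d : ℕ}
    (hp : ∀ i, (p i).IsHomogeneous d) (f : MvPolynomial σ R) :
    gradedAeval g (aeval p f) =
      Polynomial.expand S d (gradedAeval (fun i => aeval g (p i)) f) := by
  suffices (gradedAeval g).comp (aeval p) =
      ((Polynomial.expand S d).restrictScalars R).comp (gradedAeval fun i => aeval g (p i)) from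
    DFunLike.congr_fun this f
  ext i : 1
  simp only [AlgHom.comp_apply, aeval_X, gradedAeval_of_isHomogeneous g (hp i), gradedAeval_X,
    AlgHom.restrictScalars_apply, map_mul, Polynomial.expand_X, Polynomial.expand_C,
    ← Polynomial.C_mul_X_pow_eq_monomial, mul_comm]

variable {g : σ → MvPolynomial τ R} {e : (σ →₀ ℕ) → τ →₀ ℕ}

theorem coeff_coeff_gradedAeval [DecidableEq τ]
    (he : ∀ m c, aeval g (monomial m c : MvPolynomial σ R) = monomial (e m) c)
    (f : MvPolynomial σ R) (d : ℕ) (s : τ →₀ ℕ) :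
    coeff s ((gradedAeval g f).coeff d) =
      ∑ m ∈ f.support with m.degree = d ∧ e m = s, coeff m f := by
  conv_lhs => rw [f.as_sum, map_sum]
  simp only [gradedAeval_monomial, he, Polynomial.finsetSum_coeff, Polynomial.coeff_monomial,
    coeff_sum, apply_ite (coeff s), coeff_monomial, coeff_zero, ← ite_and, Finset.sum_filter]

theorem exists_of_mem_support_coeff_gradedAeval
    (he : ∀ m c, aeval g (monomial m c : MvPolynomial σ R) = monomial (e m) c)
    {f : MvPolynomial σ R} {d : ℕ} {s : τ →₀ ℕ} (hs : s ∈ ((gradedAeval g f).coeff d).support) :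
    ∃ m ∈ f.support, m.degree = d ∧ e m = s := by
  classical
  rw [mem_support_iff, coeff_coeff_gradedAeval he] at hs
  obtain ⟨m, hm, -⟩ := Finset.exists_ne_zero_of_sum_ne_zero hs
  exact ⟨m, Finset.mem_filter.1 hm⟩

theorem gradedAeval_injOn
    (he : ∀ m c, aeval g (monomial m c : MvPolynomial σ R) = monomial (e m) c)
    {M : Set (σ →₀ ℕ)} (hM : M.InjOn fun m => (m.degree, e m)) :
    Set.InjOn (gradedAeval g) {f : MvPolynomial σ R | ↑f.support ⊆ M} := by
  classical
  have coeff_eq {f : MvPolynomial σ R} (hf : ↑f.support ⊆ M) {m : σ →₀ ℕ} (hm : m ∈ M) :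
      coeff m f = coeff (e m) ((gradedAeval g f).coeff m.degree) := by
    rw [coeff_coeff_gradedAeval he, Finset.sum_filter, Finset.sum_eq_single m,
      if_pos ⟨rfl, rfl⟩]
    · exact fun b hb hbm => if_neg fun h => hbm (hM (hf hb) hm (Prod.ext h.1 h.2))
    · exact fun hm => by rw [if_pos ⟨rfl, rfl⟩, notMem_support_iff.1 hm]
  intro f hf f' hf' h
  ext m
  by_cases hm : m ∈ M
  · rw [coeff_eq hf hm, coeff_eq hf' hm, h]
  · rw [notMem_support_iff.1 fun h => hm (hf h), notMem_support_iff.1 fun h => hm (hf' h)]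

end GradedAeval

section Homogenization

variable {R : Type*} [CommSemiring R] {n : ℕ}

theorem aeval_cons_one_X_monomial (v : Fin (n + 1) →₀ ℕ) (c : R) :
    aeval (Fin.cons 1 X : Fin (n + 1) → MvPolynomial (Fin n) R) (monomial v c) =
      monomial v.tail c := by
  rw [aeval_monomial, monomial_eq, Finsupp.prod_fintype _ _ (by simp),
    Finsupp.prod_fintype _ _ (by simp), Fin.prod_univ_succ]
  simp [Finsupp.tail_apply, algebraMap_eq]

theorem gradedAeval_cons_one_X_injective :
    Function.Injective
      (gradedAeval (Fin.cons 1 X : Fin (n + 1) → MvPolynomial (Fin n) R) :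
        MvPolynomial (Fin (n + 1)) R →ₐ[R] _) := by
  have degree_tail_injOn : Set.univ.InjOn fun v : Fin (n + 1) →₀ ℕ => (v.degree, v.tail) := by
    intro v _ w _ h
    obtain ⟨hd, ht⟩ := Prod.ext_iff.1 h
    have hsucc (i : Fin n) : v i.succ = w i.succ := DFunLike.congr_fun ht i
    simp only [Finsupp.degree_eq_sum, Fin.sum_univ_succ, hsucc] at hd
    exact Finsupp.ext (Fin.cases (Nat.add_right_cancel hd) hsucc)
  simpa [Set.injOn_univ] using gradedAeval_injOn aeval_cons_one_X_monomial degree_tail_injOn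

theorem mem_range_gradedAeval_cons_one_X {P : Polynomial (MvPolynomial (Fin n) R)}
    (hP : ∀ d, (P.coeff d).totalDegree ≤ d) :
    P ∈ (gradedAeval (R := R) (Fin.cons 1 X : Fin (n + 1) → MvPolynomial (Fin n) R)).range := by
  rw [P.as_sum_support]
  refine Subalgebra.sum_mem _ fun d _ => ?_
  rw [(P.coeff d).as_sum, map_sum]
  refine Subalgebra.sum_mem _ fun u hu =>
    ⟨monomial (u.cons (d - u.degree)) (coeff u (P.coeff d)), ?_⟩
  have hdeg : (u.cons (d - u.degree)).degree = d := by
    have hle : u.degree ≤ d := (le_totalDegree hu).trans (hP d)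
    rw [Finsupp.degree_eq_sum] at hle ⊢
    simp only [Fin.sum_univ_succ, Finsupp.cons_zero, Finsupp.cons_succ, Finsupp.degree_eq_sum]
    omega
  exact (gradedAeval_monomial _ _ _).trans
    (by rw [hdeg, aeval_cons_one_X_monomial, Finsupp.tail_cons])

end Homogenization

section ElementarySymmetric

theorem supDegree_le_supDegree_sum_of_injOn {ι R A B : Type*} [Semiring R] [AddZeroClass A]
    [LinearOrder B] [OrderBot B] {D : A → B} {s : Finset ι} {f : ι → AddMonoidAlgebra R A}
    (hf : (s : Set ι).InjOn fun i => (f i).supDegree D) {i : ι} (hi : i ∈ s) :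
    (f i).supDegree D ≤ (∑ j ∈ s, f j).supDegree D := by
  obtain ⟨k, hk, hmax⟩ := s.exists_max_image (fun i => (f i).supDegree D) ⟨i, hi⟩
  rw [(AddMonoidAlgebra.supDegree_leadingCoeff_sum_eq hk fun j hj hjk =>
    (hmax j hj).lt_of_ne (hf.ne hj hk hjk)).1]
  exact hmax i hi

theorem totalDegree_le_degreeOf_zero_esymmAlgHom {R : Type*} [CommRing R] {m n : ℕ} [NeZero m]
    (hnm : n ≤ m) (p : MvPolynomial (Fin n) R) :
    p.totalDegree ≤ degreeOf 0 (esymmAlgHom (Fin m) R n p).val := by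
  refine Finset.sup_le fun u hu => ?_
  have hsum : (esymmAlgHom (Fin m) R n p).val =
      ∑ t ∈ p.support, esymmAlgHomMonomial (Fin m) t (coeff t p) := by
    conv_lhs => rw [p.as_sum, map_sum]
    exact AddSubmonoidClass.coe_finsetSum _ _
  have hinj : (p.support : Set (Fin n →₀ ℕ)).InjOn fun t =>
      (esymmAlgHomMonomial (Fin m) t (coeff t p)).supDegree toLex := by
    intro t ht s hs h
    refine DFunLike.ext' (Fin.accumulate_injective hnm ?_)
    rw [← supDegree_esymmAlgHomMonomial (mem_support_iff.1 ht) t hnm,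
      ← supDegree_esymmAlgHomMonomial (mem_support_iff.1 hs) s hnm]
    exact congrArg (fun x : Lex (Fin m →₀ ℕ) => ⇑(ofLex x)) h
  have hne : (esymmAlgHom (Fin m) R n p).val ≠ 0 := fun h => by
    rw [(injective_iff_map_eq_zero _).1 (esymmAlgHom_fin_injective R hnm) p (Subtype.ext h)] at hu
    simp at hu
  obtain ⟨s, hs, hsup⟩ := AddMonoidAlgebra.exists_supDegree_mem_support toLex hne
  have hle := supDegree_le_supDegree_sum_of_injOn hinj hu
  rw [← hsum, hsup] at hle
  calc (u.sum fun _ e => e)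
      = ofLex ((esymmAlgHomMonomial (Fin m) u (coeff u p)).supDegree toLex) 0 := by
        rw [supDegree_esymmAlgHomMonomial (mem_support_iff.1 hu) u hnm, Finsupp.sum_fintype]
        all_goals simp
    _ ≤ s 0 := Pi.apply_le_of_toLex hle fun _ h => absurd h (Fin.not_lt_zero _)
    _ ≤ degreeOf 0 (esymmAlgHom (Fin m) R n p).val := monomial_le_degreeOf 0 hs

end ElementarySymmetric

section Blocks

variable {R ι : Type*} [CommSemiring R]

/-- The condition on degrees in the description of the image: in each monomial of `f`, all the
pairs of variables `(x_{0i}, x_{1i})` have the same total degree. -/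
def IsBalanced (f : MvPolynomial (ι × Fin 2) R) : Prop :=
  ∀ m ∈ f.support, ∀ i j : ι, m (i, 0) + m (i, 1) = m (j, 0) + m (j, 1)

theorem exists_weight_eq_nsmul_of_mem_support_aeval {σ τ M : Type*} [AddCommMonoid M]
    {w : τ → M} {p : σ → MvPolynomial τ R} {a : M} (hp : ∀ i, IsWeightedHomogeneous w (p i) a)
    {f : MvPolynomial σ R} {m : τ →₀ ℕ} (hm : m ∈ (aeval p f).support) :
    ∃ d : ℕ, Finsupp.weight w m = d • a := by
  classical
  rw [aeval_eq_eval₂Hom, coe_eval₂Hom, eval₂_eq] at hm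
  obtain ⟨v, -, hv⟩ := Finset.mem_biUnion.1 (support_sum hm)
  have hom := (IsWeightedHomogeneous.prod v.support _ _ fun i _ => (hp i).pow (v i)).C_mul
    (coeff v f)
  exact ⟨v.degree, (hom (mem_support_iff.1 hv)).trans (Finset.sum_smul ..).symm⟩

/-- The coordinates of the affine chart `x_{0i} = 1`, `x_{1i} = t_i` of `(ℙ¹)^ι`, at which
balanced polynomials are dehomogenized. -/
noncomputable def affineCoord (R : Type*) [CommSemiring R] {ι : Type*} (q : ι × Fin 2) :
    MvPolynomial ι R :=
  ![1, X q.1] q.2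

theorem aeval_affineCoord_monomial [Finite ι] (m : ι × Fin 2 →₀ ℕ) (c : R) :
    aeval (affineCoord R) (monomial m c) =
      monomial (m.comapDomain (·, 1) (Prod.mk_left_injective 1).injOn) c := by
  cases nonempty_fintype ι
  rw [aeval_monomial, monomial_eq, Finsupp.prod_fintype _ _ (by simp),
    Finsupp.prod_fintype _ _ (by simp), Fintype.prod_prod_type]
  simp [affineCoord, algebraMap_eq]

theorem degree_of_balanced [Fintype ι] {m : ι × Fin 2 →₀ ℕ}
    (hm : ∀ i j : ι, m (i, 0) + m (i, 1) = m (j, 0) + m (j, 1)) (i : ι) :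
    m.degree = Fintype.card ι * (m (i, 0) + m (i, 1)) := by
  simp [Finsupp.degree_eq_sum, Fintype.sum_prod_type, hm _ i]

theorem gradedAeval_affineCoord_injOn [Finite ι] :
    Set.InjOn (gradedAeval (affineCoord R)) {f : MvPolynomial (ι × Fin 2) R | IsBalanced f} := by
  cases nonempty_fintype ι
  refine gradedAeval_injOn aeval_affineCoord_monomial
    (M := {m : ι × Fin 2 →₀ ℕ | ∀ i j : ι, m (i, 0) + m (i, 1) = m (j, 0) + m (j, 1)})
    fun m hm m' hm' h => ?_
  obtain ⟨hd, hs⟩ := Prod.ext_iff.1 h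
  have h1 (i : ι) : m (i, 1) = m' (i, 1) := DFunLike.congr_fun hs i
  have h0 (i : ι) : m (i, 0) = m' (i, 0) := by
    have : Nonempty ι := ⟨i⟩
    simp only [degree_of_balanced hm i, degree_of_balanced hm' i, h1] at hd
    exact Nat.add_right_cancel (Nat.eq_of_mul_eq_mul_left Fintype.card_pos hd)
  ext ⟨i, j⟩
  fin_cases j
  exacts [h0 i, h1 i]

theorem IsBalanced.exists_card_mul_and_le_of_mem_support [Fintype ι]
    {f : MvPolynomial (ι × Fin 2) R} (hf : IsBalanced f) (i : ι) {N : ℕ} {s : ι →₀ ℕ}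
    (hs : s ∈ ((gradedAeval (affineCoord R) f).coeff N).support) :
    ∃ d, N = Fintype.card ι * d ∧ s i ≤ d := by
  obtain ⟨m, hm, rfl, rfl⟩ := exists_of_mem_support_coeff_gradedAeval aeval_affineCoord_monomial hs
  exact ⟨_, degree_of_balanced (hf m hm) i, Nat.le_add_left _ _⟩

theorem IsBalanced.expand_contract_gradedAeval_affineCoord [Fintype ι] [Nonempty ι]
    {f : MvPolynomial (ι × Fin 2) R} (hf : IsBalanced f) :
    Polynomial.expand _ (Fintype.card ι)
      ((gradedAeval (affineCoord R) f).contract (Fintype.card ι)) =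
        gradedAeval (affineCoord R) f := by
  ext N : 1
  rw [Polynomial.coeff_expand Fintype.card_pos, Polynomial.coeff_contract Fintype.card_ne_zero]
  split_ifs with hN
  · rw [Nat.div_mul_cancel hN]
  · by_contra! hne
    obtain ⟨s, hs⟩ := support_nonempty.2 hne.symm
    obtain ⟨d, hd, -⟩ := hf.exists_card_mul_and_le_of_mem_support (Classical.arbitrary ι) hs
    exact hN ⟨d, hd⟩

theorem IsBalanced.degreeOf_coeff_contract_gradedAeval_affineCoord_le [Fintype ι]
    {f : MvPolynomial (ι × Fin 2) R} (hf : IsBalanced f) (i : ι) (d : ℕ) :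
    degreeOf i (((gradedAeval (affineCoord R) f).contract (Fintype.card ι)).coeff d) ≤ d := by
  have : Nonempty ι := ⟨i⟩
  rw [Polynomial.coeff_contract Fintype.card_ne_zero]
  refine degreeOf_le_iff.2 fun s hs => ?_
  obtain ⟨d', hd', hle⟩ := hf.exists_card_mul_and_le_of_mem_support i hs
  rw [mul_comm, Nat.mul_right_inj Fintype.card_ne_zero] at hd'
  exact hd' ▸ hle

theorem isSymmetric_coeff_gradedAeval_affineCoord {f : MvPolynomial (ι × Fin 2) R}
    (hf : ∀ σ : Equiv.Perm ι, rename (fun q : ι × Fin 2 => (σ q.1, q.2)) f = f) (N : ℕ) :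
    ((gradedAeval (affineCoord R) f).coeff N).IsSymmetric := by
  intro σ
  have hσ (q : ι × Fin 2) : rename σ (affineCoord R q) = affineCoord R (σ q.1, q.2) := by
    obtain ⟨i, j⟩ := q
    fin_cases j <;> simp [affineCoord]
  conv_rhs => rw [← hf σ, gradedAeval_rename]
  simp only [← hσ, ← mapAlgHom_gradedAeval, Polynomial.coe_mapAlgHom, Polynomial.coeff_map]
  rfl

end Blocks

section Ehsp

variable {A : Type*} [CommRing A] {n : ℕ}

theorem rename_ehsp (σ : Equiv.Perm (Fin n)) (k : ℕ) :
    rename (fun q : Fin n × Fin 2 => (σ q.1, q.2)) (ehsp A n k) = ehsp A n k := by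
  simp only [ehsp, map_sum, map_mul, map_prod, rename_X]
  refine Finset.sum_equiv σ.finsetCongr (by simp [Finset.mem_powersetCard]) fun S _ => ?_
  have hcompl : (S.map σ.toEmbedding)ᶜ = Sᶜ.map σ.toEmbedding := by ext; simp
  simp [hcompl]

theorem rename_aeval_ehsp (σ : Equiv.Perm (Fin n)) (F : MvPolynomial (Fin (n + 1)) A) :
    rename (fun q : Fin n × Fin 2 => (σ q.1, q.2)) (aeval (fun k : Fin (n + 1) => ehsp A n k) F) =
      aeval (fun k : Fin (n + 1) => ehsp A n k) F := by
  rw [← AlgHom.comp_apply, comp_aeval]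
  simp only [rename_ehsp]

theorem isWeightedHomogeneous_ehsp_s8 {M : Type*} [AddCommMonoid M] (w : Fin n → M) (k : ℕ) :
    IsWeightedHomogeneous (fun q : Fin n × Fin 2 => w q.1) (ehsp A n k) (∑ i, w i) := by
  refine IsWeightedHomogeneous.sum _ _ _ fun S _ => ?_
  rw [← Finset.sum_compl_add_sum S]
  exact (IsWeightedHomogeneous.prod _ _ _ fun i _ => isWeightedHomogeneous_X A _ (i, 0)).mul
    (IsWeightedHomogeneous.prod _ _ _ fun i _ => isWeightedHomogeneous_X A _ (i, 1))

theorem isHomogeneous_ehsp (k : ℕ) : (ehsp A n k).IsHomogeneous n := by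
  simpa [IsHomogeneous, Pi.one_def] using
    isWeightedHomogeneous_ehsp_s8 (A := A) (fun _ : Fin n => (1 : ℕ)) k

theorem isBalanced_aeval_ehsp (F : MvPolynomial (Fin (n + 1)) A) :
    IsBalanced (aeval (fun k : Fin (n + 1) => ehsp A n k) F) := by
  intro m hm
  obtain ⟨d, hd⟩ := exists_weight_eq_nsmul_of_mem_support_aeval
    (fun k : Fin (n + 1) =>
      isWeightedHomogeneous_ehsp_s8 (fun i => (Pi.single i 1 : Fin n → ℕ)) (k : ℕ)) hm
  have hblock (i : Fin n) : m (i, 0) + m (i, 1) = d := by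
    simpa [Finsupp.weight_apply, Finsupp.sum_fintype, Fintype.sum_prod_type, Pi.single_apply,
      Finset.sum_add_distrib] using congrFun hd i
  exact fun i j => (hblock i).trans (hblock j).symm

theorem aeval_affineCoord_ehsp (k : ℕ) :
    aeval (affineCoord A) (ehsp A n k) = esymm (Fin n) A k := by
  simp [ehsp, esymm, affineCoord]

theorem gradedAeval_affineCoord_aeval_ehsp (F : MvPolynomial (Fin (n + 1)) A) :
    gradedAeval (affineCoord A) (aeval (fun k : Fin (n + 1) => ehsp A n k) F) =
      Polynomial.expand _ n (Polynomial.mapAlgHom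
        ((symmetricSubalgebra (Fin n) A).val.comp (esymmAlgHom (Fin n) A n))
        (gradedAeval (Fin.cons 1 X : Fin (n + 1) → MvPolynomial (Fin n) A) F)) := by
  have hcoord (k : Fin (n + 1)) : aeval (affineCoord A) (ehsp A n k) =
      ((symmetricSubalgebra (Fin n) A).val.comp (esymmAlgHom (Fin n) A n))
        ((Fin.cons 1 X : Fin (n + 1) → MvPolynomial (Fin n) A) k) := by
    rw [aeval_affineCoord_ehsp]
    cases k using Fin.cases <;> simp [esymmAlgHom_apply]
  rw [gradedAeval_aeval _ fun k : Fin (n + 1) => isHomogeneous_ehsp (k : ℕ),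
    mapAlgHom_gradedAeval]
  simp only [hcoord]

theorem aeval_ehsp_injective (hn : 0 < n) :
    Function.Injective (aeval (R := A) fun k : Fin (n + 1) => ehsp A n k) := by
  refine Function.Injective.of_comp (f := gradedAeval (affineCoord A)) ?_
  simp only [Function.comp_def, gradedAeval_affineCoord_aeval_ehsp]
  exact (Polynomial.expand_injective hn).comp
    ((Polynomial.map_injective _ (Subtype.val_injective.comp
      (esymmAlgHom_fin_injective A le_rfl))).comp gradedAeval_cons_one_X_injective)

theorem exists_map_esymmAlgHom_eq {P : Polynomial (MvPolynomial (Fin n) A)}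
    (hP : ∀ d, (P.coeff d).IsSymmetric) :
    ∃ Q, Polynomial.mapAlgHom
      ((symmetricSubalgebra (Fin n) A).val.comp (esymmAlgHom (Fin n) A n)) Q = P := by
  refine (Polynomial.lifts_iff_coeff_lifts _).2 fun d => ?_
  obtain ⟨q, hq⟩ := (esymmAlgHom_fin_bijective A n).2 ⟨_, hP d⟩
  exact ⟨q, congrArg Subtype.val hq⟩

theorem exists_aeval_ehsp_eq (hn : 0 < n) {f : MvPolynomial (Fin n × Fin 2) A}
    (hsymm : ∀ σ : Equiv.Perm (Fin n), rename (fun q : Fin n × Fin 2 => (σ q.1, q.2)) f = f)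
    (hf : IsBalanced f) :
    ∃ F : MvPolynomial (Fin (n + 1)) A, aeval (fun k : Fin (n + 1) => ehsp A n k) F = f := by
  have : NeZero n := ⟨hn.ne'⟩
  obtain ⟨Q, hQ⟩ : ∃ Q, Polynomial.mapAlgHom
      ((symmetricSubalgebra (Fin n) A).val.comp (esymmAlgHom (Fin n) A n)) Q =
        (gradedAeval (affineCoord A) f).contract n :=
    exists_map_esymmAlgHom_eq fun d => by
      rw [Polynomial.coeff_contract hn.ne']
      exact isSymmetric_coeff_gradedAeval_affineCoord hsymm _
  have totalDegree_le (d : ℕ) : (Q.coeff d).totalDegree ≤ d :=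
    calc (Q.coeff d).totalDegree
        ≤ degreeOf 0 (esymmAlgHom (Fin n) A n (Q.coeff d)).val :=
          totalDegree_le_degreeOf_zero_esymmAlgHom le_rfl _
      _ = degreeOf 0 (((gradedAeval (affineCoord A) f).contract n).coeff d) := by
          rw [← hQ, Polynomial.coe_mapAlgHom, Polynomial.coeff_map]
          rfl
      _ ≤ d := by
          simpa using hf.degreeOf_coeff_contract_gradedAeval_affineCoord_le 0 d
  obtain ⟨F, hF⟩ := mem_range_gradedAeval_cons_one_X totalDegree_le
  refine ⟨F, gradedAeval_affineCoord_injOn (isBalanced_aeval_ehsp F) hf ?_⟩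
  calc gradedAeval (affineCoord A) (aeval (fun k : Fin (n + 1) => ehsp A n k) F)
      = Polynomial.expand _ n ((gradedAeval (affineCoord A) f).contract n) := by
        rw [gradedAeval_affineCoord_aeval_ehsp, ← hQ, ← hF]
        rfl
    _ = gradedAeval (affineCoord A) f := by
        simpa using hf.expand_contract_gradedAeval_affineCoord

end Ehsp

/-- For a nontrivial commutative ring `A` and `n ≥ 1`, the `A`-algebra map
`φ : A[y_0, …, y_n] → A[x_{01},…,x_{1n}]`, `φ(y_k) = p_k(x)`, is injective, and its image
consists exactly of the `S_n`-invariant polynomials `f` such that every monomial of `f`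
has the same total degree in the pair `(x_{0i}, x_{1i})` for each `i`. -/
theorem ehsp_aeval_injective_range (A : Type*) [CommRing A] [Nontrivial A] (n : ℕ)
    (hn : 1 ≤ n) :
    Function.Injective
        (aeval (fun k : Fin (n + 1) => ehsp A n (k : ℕ)) :
          MvPolynomial (Fin (n + 1)) A →ₐ[A] MvPolynomial (Fin n × Fin 2) A) ∧
      Set.range
          (aeval (fun k : Fin (n + 1) => ehsp A n (k : ℕ)) :
            MvPolynomial (Fin (n + 1)) A →ₐ[A] MvPolynomial (Fin n × Fin 2) A) =
        {f : MvPolynomial (Fin n × Fin 2) A |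
          (∀ σ : Equiv.Perm (Fin n),
            rename (fun q : Fin n × Fin 2 => (σ q.1, q.2)) f = f) ∧
          ∀ m ∈ f.support, ∀ i j : Fin n,
            m (i, (0 : Fin 2)) + m (i, (1 : Fin 2)) =
              m (j, (0 : Fin 2)) + m (j, (1 : Fin 2))} := by
  refine ⟨aeval_ehsp_injective hn, Set.ext fun f => ⟨?_, ?_⟩⟩
  · rintro ⟨F, rfl⟩
    exact ⟨fun σ => rename_aeval_ehsp σ F, isBalanced_aeval_ehsp F⟩
  · rintro ⟨hsymm, hbalanced⟩
    exact exists_aeval_ehsp_eq hn hsymm hbalanced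
end

section
/- Let k be an algebraically closed field of characteristic zero, let n, m ≥ 1, and let R = k[v_0, …, v_n, w_0, …, w_m] be the polynomial ring in n+m+2 independent variables. Let f(Z) = v_0 Z^n + ⋯ + v_n and g(Z) = w_0 Z^m + ⋯ + w_m over R. Then the resultant Res_{n,m}(f, g) is an irreducible element of R. -/
open Polynomial

/-!
Let `F`, `G` be the generic polynomials and let `Res = A * B`. Since `F(Z) - F(x)` and
`G(Z) - G(x)` have the common root `x`, the resultant vanishes at their coefficients, hence so does
one of the factors, say `A`. This pair is universal, so `A(f, g) = 0` whenever `f` and `g` have a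
common root, over any commutative `R`-algebra; we show that `B` is a unit.

* In `R[x] / (x ^ n)` the polynomials `Z ^ n` and `x - Z` have the common root `x`, so `x ^ n`
  divides `A(Z ^ n, x - Z)`. As `Res(Z ^ n, x - Z) = x ^ n`, the factor `B(Z ^ n, x - Z)` is a unit.
* `B(Z ^ n, G)` divides `Res(Z ^ n, G) = w_m ^ n` and is not divisible by the prime `w_m`, by the
  previous point. So it is a unit, and in particular `B(F, 0) ≠ 0`.
* `B(F, T G)` divides `Res(F, T G) = T ^ n Res` and is not divisible by `T`, so it has degree `0`
  in `T`, whence `B = B(F, 0)`: only the coefficients of `F` occur in `B`.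
* Therefore `B = B(F, 1) = B(F, Z ^ m)` divides both `Res(F, 1) = v_0 ^ m` and
  `Res(F, Z ^ m) = ± v_n ^ m`, so it is a unit.
-/

section General

theorem dvd_of_dvd_prime_pow_mul {M : Type*} [CommMonoidWithZero M] [IsCancelMulZero M]
    {p b r : M} (hp : Prime p) (n : ℕ) (hpb : ¬p ∣ b) (h : b ∣ p ^ n * r) : b ∣ r := by
  obtain ⟨c, hc⟩ := h
  obtain ⟨d, rfl⟩ := hp.pow_dvd_of_dvd_mul_left n hpb (Dvd.intro r hc)
  refine ⟨d, mul_left_cancel₀ (pow_ne_zero n hp.ne_zero) ?_⟩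
  rw [hc, mul_left_comm]

theorem associated_det_submatrix {ι R : Type*} [Fintype ι] [DecidableEq ι] [CommRing R]
    (M : Matrix ι ι R) (σ τ : Equiv.Perm ι) : Associated (M.submatrix σ τ).det M.det := by
  have isUnit_sign (ρ : Equiv.Perm ι) : IsUnit ((Equiv.Perm.sign ρ : ℤ) : R) :=
    (Equiv.Perm.sign ρ).isUnit.map (Int.castRingHom R)
  have hdet : (M.submatrix σ τ).det =
      (Equiv.Perm.sign τ : ℤ) * ((Equiv.Perm.sign σ : ℤ) * M.det) := by
    rw [← Matrix.det_permute, ← Matrix.det_permute', Matrix.submatrix_submatrix]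
    rfl
  rw [hdet, ← mul_assoc]
  exact associated_unit_mul_left _ _ ((isUnit_sign τ).mul (isUnit_sign σ))

theorem resultant_eq_zero_of_common_root {S : Type*} [CommRing S] {n m : ℕ} (hn : n ≠ 0)
    {f g : S[X]} (hf : f.natDegree ≤ n) (hg : g.natDegree ≤ m) {s : S} (hfs : f.eval s = 0)
    (hgs : g.eval s = 0) : resultant f g n m = 0 := by
  obtain ⟨p, q, -, -, h⟩ := exists_mul_add_mul_eq_C_resultant f g hf hg (Or.inl hn)
  simpa [hfs, hgs] using (congrArg (eval s) h).symm

theorem sylvester_eq_submatrix_transpose_s13 {R : Type*} [CommRing R] (n m : ℕ) (f g : R[X]) :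
    _root_.sylvester n m f g = (Polynomial.sylvester g f m n).transpose.submatrix
      (finSumFinEquiv.permCongr (Equiv.sumCongr Fin.revPerm Fin.revPerm)) Fin.revPerm := by
  ext i j
  have hj := j.isLt
  induction i using Fin.addCases with
  | left i =>
    have hi := i.isLt
    simp only [_root_.sylvester, Polynomial.sylvester, Matrix.of_apply, Fin.addCases_left,
      Set.mem_Icc, Matrix.submatrix_apply, Matrix.transpose_apply, Equiv.permCongr_apply,
      finSumFinEquiv_symm_apply_castAdd, Equiv.sumCongr_apply, Sum.map_inl,
      finSumFinEquiv_apply_left, Fin.revPerm_apply, Fin.val_rev]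
    split_ifs <;> first | omega | rfl | (congr 1; omega)
  | right i =>
    have hi := i.isLt
    simp only [_root_.sylvester, Polynomial.sylvester, Matrix.of_apply, Fin.addCases_right,
      Set.mem_Icc, Matrix.submatrix_apply, Matrix.transpose_apply, Equiv.permCongr_apply,
      finSumFinEquiv_symm_apply_natAdd, Equiv.sumCongr_apply, Sum.map_inr,
      finSumFinEquiv_apply_right, Fin.revPerm_apply, Fin.val_rev]
    split_ifs <;> first | omega | rfl | (congr 1; omega)

theorem res_associated_resultant {R : Type*} [CommRing R] (n m : ℕ) (f g : R[X]) :
    Associated (res n m f g) (resultant f g n m) := by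
  have hcomm : Associated (resultant g f m n) (resultant f g n m) := by
    rw [resultant_comm]
    exact associated_unit_mul_left _ _ (isUnit_one.neg.pow _)
  rw [res, sylvester_eq_submatrix_transpose_s13]
  refine (associated_det_submatrix _ _ _).trans ?_
  rwa [Matrix.det_transpose]

end General

section GenericPoly

variable {S T : Type*} [CommRing S] [CommRing T] {n : ℕ}

/-- The polynomial `v 0 Z ^ n + ⋯ + v n` of formal degree `n`; as in the paper, coefficients are
listed from the leading one down. -/
noncomputable def genericPoly (n : ℕ) (v : Fin (n + 1) → S) : S[X] :=
  ∑ i : Fin (n + 1), C (v i) * X ^ (n - (i : ℕ))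

theorem map_genericPoly (v : Fin (n + 1) → S) (φ : S →+* T) :
    (genericPoly n v).map φ = genericPoly n (φ ∘ v) := by
  simp [genericPoly, Polynomial.map_sum]

theorem natDegree_genericPoly_le (v : Fin (n + 1) → S) : (genericPoly n v).natDegree ≤ n :=
  natDegree_sum_le_of_forall_le _ _ fun _ _ =>
    (natDegree_C_mul_X_pow_le _ _).trans (Nat.sub_le _ _)

theorem coeff_genericPoly (v : Fin (n + 1) → S) (i : Fin (n + 1)) :
    (genericPoly n v).coeff (n - (i : ℕ)) = v i := by
  have hij (j : Fin (n + 1)) : n - (i : ℕ) = n - (j : ℕ) ↔ i = j := by omega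
  simp [genericPoly, coeff_X_pow, hij]

theorem genericPoly_coeff {f : S[X]} (hf : f.natDegree ≤ n) :
    genericPoly n (fun i => f.coeff (n - (i : ℕ))) = f := by
  conv_rhs => rw [f.as_sum_range_C_mul_X_pow' (Nat.lt_succ_of_le hf),
    ← Finset.sum_range_reflect, ← Fin.sum_univ_eq_sum_range]
  simp [genericPoly]

end GenericPoly

section CoeffRing

/-- The ring `R[v_0, …, v_n, w_0, …, w_m]`. -/
abbrev CoeffRing (R : Type*) [CommRing R] (n m : ℕ) : Type _ :=
  MvPolynomial (Fin (n + 1) ⊕ Fin (m + 1)) R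

variable (R : Type*) [CommRing R] (n m : ℕ)

/-- The polynomial `v_0 Z ^ n + ⋯ + v_n`. -/
noncomputable def genericLeft : (CoeffRing R n m)[X] :=
  genericPoly n fun i => MvPolynomial.X (Sum.inl i)

/-- The polynomial `w_0 Z ^ m + ⋯ + w_m`. -/
noncomputable def genericRight : (CoeffRing R n m)[X] :=
  genericPoly m fun j => MvPolynomial.X (Sum.inr j)

/-- The generic resultant, with Mathlib's sign convention. -/
noncomputable def genericRes : CoeffRing R n m :=
  resultant (genericLeft R n m) (genericRight R n m) n m

variable {R} {S T : Type*} [CommRing S] [CommRing T] [Algebra R S] [Algebra R T]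

/-- The evaluation `A ↦ A(f, g)` of a polynomial `A` in the coefficients of two generic
polynomials at the coefficients of `f` and `g`, viewed with formal degrees `n` and `m`. -/
noncomputable def evalCoeffs (f g : S[X]) : CoeffRing R n m →ₐ[R] S :=
  MvPolynomial.aeval
    (Sum.elim (fun i => f.coeff (n - (i : ℕ))) (fun j => g.coeff (m - (j : ℕ))))

variable {n m}

theorem natDegree_genericLeft_le : (genericLeft R n m).natDegree ≤ n :=
  natDegree_genericPoly_le _

theorem natDegree_genericRight_le : (genericRight R n m).natDegree ≤ m :=
  natDegree_genericPoly_le _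

theorem coeff_zero_genericLeft :
    (genericLeft R n m).coeff 0 = MvPolynomial.X (Sum.inl (Fin.last n)) := by
  simpa [genericLeft] using
    coeff_genericPoly (fun i => (MvPolynomial.X (Sum.inl i) : CoeffRing R n m)) (Fin.last n)

theorem coeff_zero_genericRight :
    (genericRight R n m).coeff 0 = MvPolynomial.X (Sum.inr (Fin.last m)) := by
  simpa [genericRight] using
    coeff_genericPoly (fun j => (MvPolynomial.X (Sum.inr j) : CoeffRing R n m)) (Fin.last m)

theorem coeff_self_genericLeft :
    (genericLeft R n m).coeff n = MvPolynomial.X (Sum.inl 0) := by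
  simpa [genericLeft] using
    coeff_genericPoly (fun i => (MvPolynomial.X (Sum.inl i) : CoeffRing R n m)) 0

theorem map_evalCoeffs_genericLeft {f : S[X]} (hf : f.natDegree ≤ n) (g : S[X]) :
    (genericLeft R n m).map (evalCoeffs (R := R) n m f g : _ →+* S) = f := by
  conv_rhs => rw [← genericPoly_coeff hf]
  rw [genericLeft, map_genericPoly]
  congr 1
  ext i
  simp [evalCoeffs]

theorem map_evalCoeffs_genericRight (f : S[X]) {g : S[X]} (hg : g.natDegree ≤ m) :
    (genericRight R n m).map (evalCoeffs (R := R) n m f g : _ →+* S) = g := by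
  conv_rhs => rw [← genericPoly_coeff hg]
  rw [genericRight, map_genericPoly]
  congr 1
  ext j
  simp [evalCoeffs]

theorem evalCoeffs_genericRes {f g : S[X]} (hf : f.natDegree ≤ n) (hg : g.natDegree ≤ m) :
    evalCoeffs n m f g (genericRes R n m) = resultant f g n m := by
  have h := resultant_map_map (genericLeft R n m) (genericRight R n m) n m
    (evalCoeffs (R := R) n m f g : _ →+* S)
  rw [map_evalCoeffs_genericLeft hf, map_evalCoeffs_genericRight _ hg] at h
  exact h.symm

theorem evalCoeffs_dvd_resultant {B : CoeffRing R n m} (hB : B ∣ genericRes R n m) {f g : S[X]}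
    (hf : f.natDegree ≤ n) (hg : g.natDegree ≤ m) :
    evalCoeffs n m f g B ∣ resultant f g n m :=
  evalCoeffs_genericRes (R := R) hf hg ▸ map_dvd _ hB

theorem map_evalCoeffs (φ : S →ₐ[R] T) (f g : S[X]) (A : CoeffRing R n m) :
    φ (evalCoeffs n m f g A) =
      evalCoeffs n m (f.map (φ : S →+* T)) (g.map (φ : S →+* T)) A := by
  rw [← AlgHom.comp_apply]
  congr 1
  ext (i | j) <;> simp [evalCoeffs]

theorem eval_evalCoeffs (t : S) (f g : S[X][X]) (A : CoeffRing R n m) :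
    (evalCoeffs n m f g A).eval t =
      evalCoeffs n m (f.map (evalRingHom t)) (g.map (evalRingHom t)) A := by
  have hψ : (((aeval t).restrictScalars R : S[X] →ₐ[R] S) : S[X] →+* S) = evalRingHom t := by
    ext <;> simp
  rw [← coe_evalRingHom, ← hψ, RingHom.coe_coe, map_evalCoeffs]

theorem evalCoeffs_generic (A : CoeffRing R n m) :
    evalCoeffs n m (genericLeft R n m) (genericRight R n m) A = A := by
  rw [← AlgHom.id_apply (R := R) A]
  congr 1
  ext (i | j) <;> simp [evalCoeffs, genericLeft, genericRight, coeff_genericPoly]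

theorem genericRes_ne_zero [Nontrivial R] : genericRes R n m ≠ 0 := by
  intro h
  have hres := evalCoeffs_genericRes (R := R) (natDegree_X_pow_le (R := R) n)
    (natDegree_one.trans_le m.zero_le)
  rw [h, resultant_one_right] at hres
  simp at hres

end CoeffRing

section CommonRoot

variable (R : Type*) [CommRing R] (n m : ℕ)

/-- The evaluation at `F(Z) - F(x)` and `G(Z) - G(x)`, for `F` and `G` the generic polynomials
and `x` a new variable. These two polynomials form the universal pair with a common root, namely
`Z = x`. -/
noncomputable def evalUniversalRoot : CoeffRing R n m →ₐ[R] (CoeffRing R n m)[X] :=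
  evalCoeffs n m ((genericLeft R n m).map C - C (genericLeft R n m))
    ((genericRight R n m).map C - C (genericRight R n m))

variable {R n m} {S : Type*} [CommRing S] [Algebra R S]

theorem natDegree_map_C_sub_C_le {p : S[X]} {d : ℕ} (hp : p.natDegree ≤ d) :
    (p.map C - C p).natDegree ≤ d := by
  rw [natDegree_sub_C]
  exact natDegree_map_le.trans hp

theorem eval_X_map_C_sub_C (p : S[X]) : (p.map C - C p).eval X = 0 := by
  rw [eval_sub, eval_C, eval_map, eval₂_C_X, sub_self]

theorem evalUniversalRoot_genericRes (hn : n ≠ 0) :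
    evalUniversalRoot R n m (genericRes R n m) = 0 := by
  have hF := natDegree_map_C_sub_C_le (natDegree_genericLeft_le (R := R) (n := n) (m := m))
  have hG := natDegree_map_C_sub_C_le (natDegree_genericRight_le (R := R) (n := n) (m := m))
  rw [evalUniversalRoot, evalCoeffs_genericRes hF hG]
  exact resultant_eq_zero_of_common_root hn hF hG (eval_X_map_C_sub_C _) (eval_X_map_C_sub_C _)

theorem evalCoeffs_eq_zero_of_common_root {A : CoeffRing R n m}
    (hA : evalUniversalRoot R n m A = 0) {f g : S[X]} (hf : f.natDegree ≤ n)
    (hg : g.natDegree ≤ m) {s : S} (hfs : f.eval s = 0) (hgs : g.eval s = 0) :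
    evalCoeffs n m f g A = 0 := by
  let φ : CoeffRing R n m →ₐ[R] S := evalCoeffs n m f g
  let ψ : (CoeffRing R n m)[X] →ₐ[R] S := ((aeval s).restrictScalars R).comp (mapAlgHom φ)
  have hψ (p : (CoeffRing R n m)[X]) : ψ p = (p.map (φ : CoeffRing R n m →+* S)).eval s := by
    simp [ψ, coe_aeval_eq_eval]
  have hψC : (ψ : (CoeffRing R n m)[X] →+* S).comp C = φ := by
    ext <;> simp [hψ]
  have map_ψ {p : (CoeffRing R n m)[X]} {q : S[X]}
      (hpq : p.map (φ : CoeffRing R n m →+* S) = q) (hq : q.eval s = 0) :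
      (p.map C - C p).map (ψ : (CoeffRing R n m)[X] →+* S) = q := by
    rw [Polynomial.map_sub, Polynomial.map_map, hψC, Polynomial.map_C, RingHom.coe_coe, hψ,
      hpq, hq, C_0, sub_zero]
  have h := map_evalCoeffs ψ _ _ A ▸ congrArg ψ hA
  rwa [map_zero, map_ψ (map_evalCoeffs_genericLeft hf g) hfs,
    map_ψ (map_evalCoeffs_genericRight f hg) hgs] at h

end CommonRoot

section Factors

variable {R : Type*} [CommRing R] [IsDomain R] {n m : ℕ} {A B : CoeffRing R n m}

theorem isUnit_evalCoeffs_X_pow_linear (hm : 1 ≤ m) (hAB : genericRes R n m = A * B)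
    (hA : evalUniversalRoot R n m A = 0) :
    IsUnit (evalCoeffs n m (X ^ n) (C X - X) B : R[X]) := by
  have hlin : (C X - X : R[X][X]).natDegree ≤ m := by compute_degree!
  let mod : R[X] →ₐ[R] R[X] ⧸ Ideal.span {(X : R[X]) ^ n} := Ideal.Quotient.mkₐ R _
  have mod_X_pow : mod X ^ n = 0 := by
    rw [← map_pow]
    exact Ideal.Quotient.eq_zero_iff_mem.2 (Ideal.mem_span_singleton_self _)
  -- Modulo `x ^ n`, the polynomials `Z ^ n` and `x - Z` have the common root `Z = x`.
  have hA_mod : mod (evalCoeffs n m (X ^ n) (C X - X) A) = 0 := by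
    rw [map_evalCoeffs]
    exact evalCoeffs_eq_zero_of_common_root hA (natDegree_map_le.trans (natDegree_X_pow_le n))
      (natDegree_map_le.trans hlin) (s := mod X) (by simp [mod_X_pow]) (by simp)
  obtain ⟨c, hc⟩ : X ^ n ∣ evalCoeffs n m (X ^ n) (C X - X) A :=
    Ideal.mem_span_singleton.1 (Ideal.Quotient.eq_zero_iff_mem.1 hA_mod)
  have hres := evalCoeffs_genericRes (R := R) (natDegree_X_pow_le (R := R[X]) n) hlin
  rw [hAB, map_mul, hc, resultant_X_pow_left _ _ _ hlin, mul_assoc] at hres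
  have hcB : c * evalCoeffs n m (X ^ n) (C X - X) B = 1 :=
    mul_left_cancel₀ (pow_ne_zero n X_ne_zero) (by simpa using hres)
  exact IsUnit.of_mul_eq_one_right _ hcB

theorem isUnit_evalCoeffs_X_pow_genericRight (hm : 1 ≤ m) (hAB : genericRes R n m = A * B)
    (hA : evalUniversalRoot R n m A = 0) :
    IsUnit (evalCoeffs n m (X ^ n) (genericRight R n m) B) := by
  have hlin : (C X - X : R[X][X]).natDegree ≤ m := by compute_degree!
  let w : CoeffRing R n m := MvPolynomial.X (Sum.inr (Fin.last m))
  have hdvd : evalCoeffs n m (X ^ n) (genericRight R n m) B ∣ w ^ n * 1 := by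
    have hw : (genericRight R n m).coeff 0 = w := coeff_zero_genericRight
    rw [mul_one, ← hw, ← resultant_X_pow_left _ _ _ natDegree_genericRight_le]
    exact evalCoeffs_dvd_resultant (Dvd.intro_left A hAB.symm) (natDegree_X_pow_le n)
      natDegree_genericRight_le
  have hndvd : ¬w ∣ evalCoeffs n m (X ^ n) (genericRight R n m) B := by
    intro h
    have hX := map_dvd (evalCoeffs n m 0 (C X - X) : CoeffRing R n m →ₐ[R] R[X]) h
    rw [map_evalCoeffs, map_evalCoeffs_genericRight _ hlin] at hX
    have hw : evalCoeffs n m 0 (C X - X) w = (X : R[X]) := by simp [w, evalCoeffs]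
    rw [hw] at hX
    refine not_isUnit_X (isUnit_of_dvd_unit hX ?_)
    simpa using isUnit_evalCoeffs_X_pow_linear hm hAB hA
  exact isUnit_of_dvd_one (dvd_of_dvd_prime_pow_mul MvPolynomial.X_prime n hndvd hdvd)

theorem evalCoeffs_genericLeft_zero_eq_self (hB : B ∣ genericRes R n m)
    (hB₀ : evalCoeffs n m (genericLeft R n m) 0 B ≠ 0) :
    evalCoeffs n m (genericLeft R n m) 0 B = B := by
  set F := genericLeft R n m
  set G := genericRight R n m
  let b : (CoeffRing R n m)[X] := evalCoeffs n m (F.map C) (C X * G.map C) B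
  have eval_b (t : CoeffRing R n m) : b.eval t = evalCoeffs n m F (C t * G) B := by
    have hC : (evalRingHom t).comp C = RingHom.id _ := RingHom.ext fun _ => eval_C
    rw [eval_evalCoeffs, Polynomial.map_mul, Polynomial.map_map, Polynomial.map_map, hC,
      Polynomial.map_id, Polynomial.map_id, Polynomial.map_C, coe_evalRingHom, eval_X]
  have hdvd : b ∣ X ^ n * C (genericRes R n m) := by
    rw [genericRes, ← resultant_map_map, ← resultant_C_mul_right]
    exact evalCoeffs_dvd_resultant hB (natDegree_map_le.trans natDegree_genericLeft_le)
      ((natDegree_C_mul_le _ _).trans (natDegree_map_le.trans natDegree_genericRight_le))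
  have hndvd : ¬X ∣ b := by
    rwa [X_dvd_iff, coeff_zero_eq_eval_zero, eval_b, C_0, zero_mul]
  have hdeg : b.natDegree = 0 := Nat.le_zero.1 <|
    (natDegree_le_of_dvd (dvd_of_dvd_prime_pow_mul prime_X n hndvd hdvd)
      (C_ne_zero.2 genericRes_ne_zero)).trans (natDegree_C _).le
  calc evalCoeffs n m F 0 B = b.eval 0 := by rw [eval_b, C_0, zero_mul]
    _ = b.eval 1 := by rw [eq_C_of_natDegree_eq_zero hdeg, eval_C, eval_C]
    _ = B := by rw [eval_b, C_1, one_mul, evalCoeffs_generic]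

theorem isUnit_of_evalCoeffs_genericLeft_zero_eq_self (hn : 1 ≤ n) (hB : B ∣ genericRes R n m)
    (hBF : evalCoeffs n m (genericLeft R n m) 0 B = B) : IsUnit B := by
  let F : (CoeffRing R n m)[X] := genericLeft R n m
  have hF : F.natDegree ≤ n := natDegree_genericLeft_le
  have hB_eq (g : (CoeffRing R n m)[X]) : evalCoeffs n m F g B = B := by
    have h := map_evalCoeffs (evalCoeffs n m F g) F 0 B
    rwa [map_evalCoeffs_genericLeft hF, Polynomial.map_zero, hBF] at h
  have hdvd_lead : B ∣ MvPolynomial.X (Sum.inl 0) ^ m := by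
    have h := evalCoeffs_dvd_resultant hB hF (natDegree_one.trans_le m.zero_le)
    rwa [hB_eq, resultant_one_right, coeff_self_genericLeft] at h
  have hdvd_const : B ∣ MvPolynomial.X (Sum.inl (Fin.last n)) ^ m * (-1) ^ (n * m) := by
    have h := evalCoeffs_dvd_resultant hB hF (natDegree_X_pow_le m)
    rwa [hB_eq, resultant_X_pow_right _ _ _ hF, coeff_zero_genericLeft, mul_comm] at h
  have hndvd : ¬MvPolynomial.X (Sum.inl (Fin.last n)) ∣ B := by
    intro h
    have hX := MvPolynomial.X_prime.dvd_of_dvd_pow (h.trans hdvd_lead)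
    have hlast := Fin.ext_iff.1 (Sum.inl_injective (MvPolynomial.X_dvd_X.1 hX))
    simp only [Fin.val_last, Fin.val_zero] at hlast
    omega
  exact isUnit_of_dvd_unit (dvd_of_dvd_prime_pow_mul MvPolynomial.X_prime m hndvd hdvd_const)
    (isUnit_one.neg.pow _)

theorem isUnit_of_genericRes_eq_mul (hn : 1 ≤ n) (hm : 1 ≤ m) (hAB : genericRes R n m = A * B)
    (hA : evalUniversalRoot R n m A = 0) : IsUnit B := by
  have hdvd : B ∣ genericRes R n m := Dvd.intro_left A hAB.symm
  refine isUnit_of_evalCoeffs_genericLeft_zero_eq_self hn hdvd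
    (evalCoeffs_genericLeft_zero_eq_self hdvd fun h₀ => ?_)
  have h_unit := (isUnit_evalCoeffs_X_pow_genericRight hm hAB hA).map
    (evalCoeffs n m (X ^ n) 0 : CoeffRing R n m →ₐ[R] R)
  have h_zero := congrArg (evalCoeffs n m (X ^ n) 0 : CoeffRing R n m →ₐ[R] R) h₀
  rw [map_evalCoeffs, map_evalCoeffs_genericRight _ (natDegree_zero.trans_le m.zero_le)] at h_unit
  rw [map_evalCoeffs, map_evalCoeffs_genericLeft (natDegree_X_pow_le n)] at h_zero
  simp only [Polynomial.map_pow, map_X, Polynomial.map_zero, map_zero] at h_unit h_zero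
  exact not_isUnit_zero (h_zero ▸ h_unit)

theorem irreducible_genericRes (hn : 1 ≤ n) (hm : 1 ≤ m) : Irreducible (genericRes R n m) := by
  have hroot := evalUniversalRoot_genericRes (R := R) (m := m) (Nat.one_le_iff_ne_zero.1 hn)
  refine ⟨fun hu => not_isUnit_zero (hroot ▸ hu.map (evalUniversalRoot R n m)),
    fun A B hAB => ?_⟩
  rw [hAB, map_mul] at hroot
  rcases mul_eq_zero.1 hroot with hA | hB
  · exact Or.inr (isUnit_of_genericRes_eq_mul hn hm hAB hA)
  · exact Or.inl (isUnit_of_genericRes_eq_mul hn hm (hAB.trans (mul_comm A B)) hB)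

end Factors

theorem genericRes_irreducible_general (R : Type*) [CommRing R] [IsDomain R]
    (n m : ℕ) (hn : 1 ≤ n) (hm : 1 ≤ m) :
    Irreducible
      (res n m
        (∑ i : Fin (n + 1),
          Polynomial.C (MvPolynomial.X (Sum.inl i) :
            MvPolynomial (Fin (n + 1) ⊕ Fin (m + 1)) R) * Polynomial.X ^ (n - (i : ℕ)))
        (∑ j : Fin (m + 1),
          Polynomial.C (MvPolynomial.X (Sum.inr j) :
            MvPolynomial (Fin (n + 1) ⊕ Fin (m + 1)) R) * Polynomial.X ^ (m - (j : ℕ)))) :=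
  (res_associated_resultant n m (genericLeft R n m) (genericRight R n m)).irreducible_iff.2
    (irreducible_genericRes hn hm)

/-- Over an algebraically closed field `k` of characteristic zero, the
generic resultant `Res_{n,m}(f, g)` of `f(Z) = v_0 Z^n + ⋯ + v_n` and
`g(Z) = w_0 Z^m + ⋯ + w_m` is an irreducible element of `R = k[v_0,…,v_n,w_0,…,w_m]`. -/
theorem genericRes_irreducible (k : Type*) [Field k] [IsAlgClosed k] [CharZero k]
    (n m : ℕ) (hn : 1 ≤ n) (hm : 1 ≤ m) :
    Irreducible
      (res n m
        (∑ i : Fin (n + 1),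
          Polynomial.C (MvPolynomial.X (Sum.inl i) :
            MvPolynomial (Fin (n + 1) ⊕ Fin (m + 1)) k) * Polynomial.X ^ (n - (i : ℕ)))
        (∑ j : Fin (m + 1),
          Polynomial.C (MvPolynomial.X (Sum.inr j) :
            MvPolynomial (Fin (n + 1) ⊕ Fin (m + 1)) k) * Polynomial.X ^ (m - (j : ℕ)))) :=
  genericRes_irreducible_general k n m hn hm
end

section
/- Let G be a finite group acting by ring automorphisms on a commutative ring S such that the order of G is invertible in S, let R = S^G be the subring of G-invariant elements, and let I be an ideal of R. Then G acts on the quotient ring S/IS (where IS is the ideal of S generated by I), and the natural ring homomorphism R/I → (S/IS)^G induced by the inclusion R → S is an isomorphism. -/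
variable {S : Type*} [CommRing S]

/-- For an ideal `I` of a subring `R ⊆ S`, the ideal `IS` of `S` generated by `I`. -/
def extendedIdeal (R : Subring S) (I : Ideal R) : Ideal S :=
  I.map R.subtype

/-- The natural ring homomorphism `R/I → S/IS` induced by the inclusion `R → S`. -/
noncomputable def natQuotientMap (R : Subring S) (I : Ideal R) :
    R ⧸ I →+* S ⧸ extendedIdeal R I :=
  Ideal.Quotient.lift I ((Ideal.Quotient.mk (extendedIdeal R I)).comp R.subtype)
    (fun r hr => by
      exact Ideal.Quotient.eq_zero_iff_mem.mpr (Ideal.mem_map_of_mem R.subtype hr))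

/-! The Reynolds operator `s ↦ |G|⁻¹ ∑ g, g • s` is an `R`-linear retraction `ρ` of `R → S`.
By linearity `ρ` maps `IS` into `I`, so `IS ∩ R = I`, which is injectivity. If the class of `s` in
`S/IS` is invariant, then all `g • s` lie in that class, hence so does their average `ρ s ∈ R`,
which is surjectivity. -/

theorem comap_map_algebraMap_of_retraction {A B : Type*} [CommSemiring A] [CommSemiring B]
    [Algebra A B] (ρ : B →ₗ[A] A) (hρ : ∀ a, ρ (algebraMap A B a) = a) (I : Ideal A) :
    (I.map (algebraMap A B)).comap (algebraMap A B) = I := by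
  refine le_antisymm (fun a ha ↦ ?_) Ideal.le_comap_map
  have ha' : algebraMap A B a ∈ (I • ⊤ : Submodule A B) := by
    rwa [Ideal.smul_top_eq_map]
  simpa [hρ] using Submodule.smul_top_le_comap_smul_top I ρ ha'

section Extension

variable {A B G : Type*} [CommSemiring A] [Monoid G]

theorem smul_mem_map_algebraMap [Semiring B] [Algebra A B] [MulSemiringAction G B]
    [SMulCommClass G A B] (I : Ideal A) (g : G) {b : B} (hb : b ∈ I.map (algebraMap A B)) :
    g • b ∈ I.map (algebraMap A B) := by
  have hle : I.map (algebraMap A B) ≤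
      (I.map (algebraMap A B)).comap (MulSemiringAction.toAlgHom A B g) := by
    refine Ideal.map_le_iff_le_comap.2 fun a ha ↦ ?_
    simpa using Ideal.mem_map_of_mem (algebraMap A B) ha
  exact hle hb

theorem mk_smul_eq_mk_algebraMap [CommRing B] [Algebra A B] [MulSemiringAction G B]
    [SMulCommClass G A B] {I : Ideal A} {a : A} {b : B} (g : G)
    (h : Ideal.Quotient.mk (I.map (algebraMap A B)) b = Ideal.Quotient.mk _ (algebraMap A B a)) :
    Ideal.Quotient.mk (I.map (algebraMap A B)) (g • b) =
      Ideal.Quotient.mk _ (algebraMap A B a) := by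
  have hg := smul_mem_map_algebraMap I g (Ideal.Quotient.eq.1 h)
  rw [smul_sub, smul_algebraMap] at hg
  exact Ideal.Quotient.eq.2 hg

end Extension

section Reynolds

variable (A B G : Type*) [CommRing A] [Ring B] [Algebra A B] [FaithfulSMul A B]
  [Group G] [Fintype G] [MulSemiringAction G B] [SMulCommClass G A B] [Algebra.IsInvariant A B G]
  [Invertible (Fintype.card G : A)]

/-- The Reynolds operator `b ↦ |G|⁻¹ ∑ g, g • b` of a finite group `G` acting on `B` with ring of
invariants `A`, as an `A`-linear map with values in `A` rather than in its image in `B`. -/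
noncomputable def reynolds : B →ₗ[A] A :=
  LinearMap.codRestrictOfInjective
    (Representation.averageMap (Representation.ofDistribMulAction A G B))
    (Algebra.linearMap A B) (FaithfulSMul.algebraMap_injective A B) fun b ↦
      Algebra.IsInvariant.isInvariant _
        (Representation.averageMap_invariant (Representation.ofDistribMulAction A G B) b)

theorem algebraMap_reynolds (b : B) :
    algebraMap A B (reynolds A B G b) = ⅟(Fintype.card G : A) • ∑ g : G, g • b := by
  have h : algebraMap A B (reynolds A B G b) =
      Representation.averageMap (Representation.ofDistribMulAction A G B) b :=
    LinearMap.codRestrictOfInjective_comp_apply _ (Algebra.linearMap A B) _ _ b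
  simp [h, GroupAlgebra.average]

theorem reynolds_algebraMap (a : A) : reynolds A B G (algebraMap A B a) = a := by
  apply FaithfulSMul.algebraMap_injective A B
  simp [algebraMap_reynolds, ← Nat.cast_smul_eq_nsmul A, smul_smul]

variable {A B G} in
theorem mk_algebraMap_reynolds {J : Ideal B} [J.IsTwoSided] {b : B}
    (hb : ∀ g : G, Ideal.Quotient.mk J (g • b) = Ideal.Quotient.mk J b) :
    Ideal.Quotient.mk J (algebraMap A B (reynolds A B G b)) = Ideal.Quotient.mk J b := by
  rw [algebraMap_reynolds, ← Ideal.Quotient.mkₐ_eq_mk A, map_smul, map_sum]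
  simp [hb, ← Nat.cast_smul_eq_nsmul A, smul_smul]

end Reynolds

/-- Let a finite group `G` act by ring automorphisms on a commutative ring
`S` with `|G|` invertible in `S`, let `R = S^G` be the subring of invariants and `I` an ideal
of `R`. Then `G` acts on `S/IS` (the ideal `IS` is `G`-stable, so the action descends), and
the natural ring homomorphism `R/I → (S/IS)^G` is an isomorphism: `natQuotientMap R I` is
injective and its range is exactly the set of `G`-invariant elements of `S/IS` (described via
representatives, i.e. the fixed points of the descended action). -/
theorem quotient_fixed_points_iso (G : Type*) [Group G] [Fintype G] [MulSemiringAction G S]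
    (hcard : IsUnit ((Fintype.card G : ℕ) : S))
    (R : Subring S) (hR : ∀ s : S, s ∈ R ↔ ∀ g : G, g • s = s) (I : Ideal R) :
    (∀ (g : G), ∀ s ∈ extendedIdeal R I, g • s ∈ extendedIdeal R I) ∧
      Function.Injective (natQuotientMap R I) ∧
      Set.range (natQuotientMap R I) =
        {x : S ⧸ extendedIdeal R I | ∀ (g : G) (s : S),
          Ideal.Quotient.mk (extendedIdeal R I) s = x →
            Ideal.Quotient.mk (extendedIdeal R I) (g • s) = x} := by
  have : SMulCommClass G R S :=
    ⟨fun g r s ↦ by simp only [Subring.smul_def, smul_eq_mul, smul_mul', (hR r).1 r.2 g]⟩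
  have : Algebra.IsInvariant R S G := ⟨fun s hs ↦ ⟨⟨s, (hR s).2 hs⟩, rfl⟩⟩
  -- `S` is integral over `R`, so the unit `|G|` of `S` is already a unit of `R`.
  have : Algebra.IsIntegral R S := Algebra.IsInvariant.isIntegral R S G
  have hcardR : IsUnit (Fintype.card G : R) :=
    isUnit_of_map_unit (algebraMap R S) _ (by rwa [map_natCast])
  let : Invertible (Fintype.card G : R) := hcardR.invertible
  refine ⟨fun g s ↦ smul_mem_map_algebraMap I g, ?_, Set.Subset.antisymm ?_ ?_⟩
  · refine RingHom.lift_injective_of_ker_le_ideal I _ ?_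
    rw [← RingHom.comap_ker, Ideal.mk_ker]
    exact (comap_map_algebraMap_of_retraction _ (reynolds_algebraMap R S G) I).le
  · rintro _ ⟨x, rfl⟩ g s hs
    obtain ⟨r, rfl⟩ := Ideal.Quotient.mk_surjective x
    exact mk_smul_eq_mk_algebraMap g hs
  · intro x hx
    obtain ⟨s, rfl⟩ := Ideal.Quotient.mk_surjective x
    exact ⟨Ideal.Quotient.mk I (reynolds R S G s), mk_algebraMap_reynolds fun g ↦ hx g s rfl⟩
end
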